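/- arXiv:2212.07198 — 7 statements merged into one kernel-verified Lean document; each statement's English description precedes it below -/
import Mathlib

section
/- Let p be a prime number. Then: (1) T_p is even if and only if p ≡ 3 (mod 4); (2) T_p is divisible by 4 if and only if p ≡ 7 (mod 8). -/
/-- The sequence of complete quotients of the continued fraction of `x`:
`α₀ = x`, `α_{k+1} = 1/(αₖ - ⌊αₖ⌋)`. -/
noncomputable def cfAlpha (x : ℝ) : ℕ → ℝ
  | 0 => x
  | k + 1 => 1 / (cfAlpha x k - (⌊cfAlpha x k⌋ : ℝ))

/-- The partial quotients of the continued fraction of `x`: `aₖ = ⌊αₖ⌋`. -/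
noncomputable def cfA (x : ℝ) (k : ℕ) : ℤ :=
  ⌊cfAlpha x k⌋

/-- The length of the minimal period of the continued fraction of `x`:
the least `l > 0` with `a_{k+l} = a_k` for all `k ≥ 1`. -/
noncomputable def cfPeriod (x : ℝ) : ℕ :=
  sInf {l : ℕ | 0 < l ∧ ∀ k : ℕ, 1 ≤ k → cfA x (k + l) = cfA x k}

/-- The integer data `(P, Q, R)` with `αₖ = (P + s) / Q` and `R` the previous `Q`. -/
noncomputable def cst (s : ℝ) (D : ℤ) : ℕ → ℤ × ℤ × ℤ
  | 0 => (0, 1, D)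
  | k + 1 =>
    let t := cst s D k
    let a := ⌊((t.1 : ℝ) + s) / (t.2.1 : ℝ)⌋
    (a * t.2.1 - t.1, t.2.2 - a * a * t.2.1 + 2 * a * t.1, t.2.1)

noncomputable def cP (s : ℝ) (D : ℤ) (k : ℕ) : ℤ := (cst s D k).1
noncomputable def cQ (s : ℝ) (D : ℤ) (k : ℕ) : ℤ := (cst s D k).2.1
noncomputable def cR (s : ℝ) (D : ℤ) (k : ℕ) : ℤ := (cst s D k).2.2
noncomputable def cB (s : ℝ) (D : ℤ) (k : ℕ) : ℤ :=
  ⌊((cP s D k : ℝ) + s) / (cQ s D k : ℝ)⌋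

lemma cP_succ (s : ℝ) (D : ℤ) (k : ℕ) :
    cP s D (k+1) = cB s D k * cQ s D k - cP s D k := rfl
lemma cQ_succ (s : ℝ) (D : ℤ) (k : ℕ) :
    cQ s D (k+1) = cR s D k - cB s D k * cB s D k * cQ s D k + 2 * cB s D k * cP s D k := rfl
lemma cR_succ (s : ℝ) (D : ℤ) (k : ℕ) : cR s D (k+1) = cQ s D k := rfl
lemma cP_zero (s : ℝ) (D : ℤ) : cP s D 0 = 0 := rfl
lemma cQ_zero (s : ℝ) (D : ℤ) : cQ s D 0 = 1 := rfl
lemma cR_zero (s : ℝ) (D : ℤ) : cR s D 0 = D := rfl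

lemma cst_norm (s : ℝ) (D : ℤ) (k : ℕ) :
    D = cP s D k * cP s D k + cQ s D k * cR s D k := by
  induction k with
  | zero => simp [cP_zero, cQ_zero, cR_zero]
  | succ k ih =>
    rw [cP_succ, cQ_succ, cR_succ]
    linear_combination ih

lemma cst_norm_succ (s : ℝ) (D : ℤ) (k : ℕ) :
    D = cP s D (k+1) * cP s D (k+1) + cQ s D (k+1) * cQ s D k := by
  have := cst_norm s D (k+1)
  rwa [cR_succ] at this

lemma cst_conv (s : ℝ) (D : ℤ) (k : ℕ) : ∃ A B A' B' : ℤ,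
    A * A - D * (B * B) = (-1)^k * cQ s D k ∧
    A' * A' - D * (B' * B') = - (-1)^k * cR s D k ∧
    A * A' - D * (B * B') = - (-1)^k * cP s D k := by
  induction k with
  | zero => exact ⟨1, 0, 0, 1, by simp [cQ_zero], by simp [cR_zero], by simp [cP_zero]⟩
  | succ k ih =>
    obtain ⟨A, B, A', B', h1, h2, h3⟩ := ih
    refine ⟨cB s D k * A + A', cB s D k * B + B', A, B, ?_, ?_, ?_⟩
    · rw [cQ_succ]
      linear_combination (cB s D k)^2 * h1 + h2 + 2 * cB s D k * h3
    · rw [cR_succ]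
      linear_combination h1
    · rw [cP_succ]
      linear_combination cB s D k * h1 + h3

lemma irr_ne {s : ℝ} (hirr : Irrational s) (n : ℤ) : s ≠ n := hirr.ne_int n

lemma irr_pair {s : ℝ} (hirr : Irrational s) {P Q P' Q' : ℤ} (hQ : 0 < Q) (hQ' : 0 < Q')
    (h : ((P : ℝ) + s) / Q = ((P' : ℝ) + s) / Q') : P = P' ∧ Q = Q' := by
  have h1 : (Q : ℝ) ≠ 0 := by exact_mod_cast hQ.ne'
  have h2 : (Q' : ℝ) ≠ 0 := by exact_mod_cast hQ'.ne'
  rw [div_eq_div_iff h1 h2] at h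
  have hq : Q = Q' := by
    by_contra hne
    have h3 : ((Q' : ℝ) - Q) ≠ 0 := by
      rw [sub_ne_zero]; exact_mod_cast Ne.symm hne
    apply hirr
    refine ⟨((P' * Q - P * Q' : ℤ) : ℚ) / ((Q' - Q : ℤ) : ℚ), ?_⟩
    push_cast
    rw [div_eq_iff h3]
    linear_combination -h
  refine ⟨?_, hq⟩
  subst hq
  have := mul_right_cancel₀ h1 h
  have : (P : ℝ) = P' := by linarith
  exact_mod_cast this

section
variable {s : ℝ} {D : ℤ}

lemma cst_inv (hs : s * s = D) (h1s : 1 < s) (hirr : Irrational s) (k : ℕ) :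
    (0 < cQ s D k ∧ (cP s D k : ℝ) < s ∧ (cQ s D k : ℝ) < s + cP s D k) ∧
    (0 < cQ s D (k+1) ∧ (cP s D (k+1) : ℝ) < s ∧ (cQ s D (k+1) : ℝ) < s + cP s D (k+1)) ∧
    s - cP s D (k+1) < cQ s D (k+1) ∧ s - cP s D (k+1) < cQ s D k := by
  have step : ∀ k, (0 < cQ s D k ∧ (cP s D k : ℝ) < s ∧ (cQ s D k : ℝ) < s + cP s D k) →
    (0 < cQ s D (k+1) ∧ (cP s D (k+1) : ℝ) < s ∧ (cQ s D (k+1) : ℝ) < s + cP s D (k+1)) ∧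
    s - cP s D (k+1) < cQ s D (k+1) ∧ s - cP s D (k+1) < cQ s D k := by
    intro k ⟨hQ, hP, hQP⟩
    have hQr : (0:ℝ) < cQ s D k := by exact_mod_cast hQ
    have ha1 : (1:ℤ) ≤ cB s D k := by
      unfold cB
      rw [Int.le_floor, le_div_iff₀ hQr]; push_cast; linarith
    have hle : (cB s D k : ℝ) * cQ s D k ≤ cP s D k + s := by
      rw [← le_div_iff₀ hQr]; exact Int.floor_le _
    have hlt : (cP s D k : ℝ) + s < (cB s D k + 1) * cQ s D k := by
      rw [← div_lt_iff₀ hQr]; exact Int.lt_floor_add_one _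
    have hP' : (cP s D (k+1) : ℝ) = cB s D k * cQ s D k - cP s D k := by
      rw [cP_succ]; push_cast; rfl
    have e1 : (cP s D (k+1) : ℝ) < s := by
      refine lt_of_le_of_ne (by linarith) (fun h => irr_ne hirr _ h.symm)
    have e2 : s - cP s D (k+1) < cQ s D k := by linarith
    have ha1' : (1:ℝ) ≤ cB s D k := by exact_mod_cast ha1
    have e3 : (cQ s D k : ℝ) < s + cP s D (k+1) := by nlinarith
    have hn : (D : ℝ) = cP s D (k+1) * cP s D (k+1) + cQ s D (k+1) * cQ s D k := by
      exact_mod_cast cst_norm_succ s D k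
    rw [← hs] at hn
    have e4 : s - cP s D (k+1) < cQ s D (k+1) := by
      by_contra hc
      push Not at hc
      nlinarith
    have e5 : (cQ s D (k+1) : ℝ) < s + cP s D (k+1) := by
      by_contra hc
      push Not at hc
      nlinarith
    have e6 : (0:ℝ) < cQ s D (k+1) := by linarith
    exact ⟨⟨by exact_mod_cast e6, e1, e5⟩, e4, e2⟩
  have base : ∀ k, (0 < cQ s D k ∧ (cP s D k : ℝ) < s ∧ (cQ s D k : ℝ) < s + cP s D k) := by
    intro k
    induction k with
    | zero => simp [cP_zero, cQ_zero]; exact ⟨by linarith, h1s⟩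
    | succ k ih => exact (step k ih).1
  exact ⟨base k, step k (base k)⟩

lemma cQ_pos (hs : s * s = D) (h1s : 1 < s) (hirr : Irrational s) (k : ℕ) : 0 < cQ s D k :=
  (cst_inv hs h1s hirr k).1.1

lemma cP_pos (hs : s * s = D) (h1s : 1 < s) (hirr : Irrational s) (k : ℕ) :
    0 < cP s D (k+1) := by
  obtain ⟨-, ⟨-, -, h1⟩, h2, -⟩ := cst_inv hs h1s hirr k
  have : (0:ℝ) < cP s D (k+1) := by linarith
  exact_mod_cast this

lemma alpha_eq (hs : s * s = D) (h1s : 1 < s) (hirr : Irrational s) (k : ℕ) :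
    cfAlpha s k = ((cP s D k : ℝ) + s) / cQ s D k := by
  induction k with
  | zero => simp [cfAlpha, cP_zero, cQ_zero]
  | succ k ih =>
    have hQ : (0:ℝ) < cQ s D k := by exact_mod_cast cQ_pos hs h1s hirr k
    have hQ' : (0:ℝ) < cQ s D (k+1) := by exact_mod_cast cQ_pos hs h1s hirr (k+1)
    have hP := (cst_inv hs h1s hirr k).2.1.2.1
    have hn : (D : ℝ) = cP s D (k+1) * cP s D (k+1) + cQ s D (k+1) * cQ s D k := by
      exact_mod_cast cst_norm_succ s D k
    have hP' : (cP s D (k+1) : ℝ) = cB s D k * cQ s D k - cP s D k := by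
      rw [cP_succ]; push_cast; rfl
    rw [cfAlpha, ih]
    change 1 / (((cP s D k : ℝ) + s) / cQ s D k - (cB s D k : ℝ)) = _
    have : ((cP s D k : ℝ) + s) / cQ s D k - (cB s D k : ℝ) = (s - cP s D (k+1)) / cQ s D k := by
      rw [hP']; field_simp; ring
    rw [this, one_div_div, div_eq_div_iff (by linarith) hQ'.ne']
    linear_combination -hs - hn

lemma cfA_eq (hs : s * s = D) (h1s : 1 < s) (hirr : Irrational s) (k : ℕ) :
    cfA s k = cB s D k := by
  rw [cfA, alpha_eq hs h1s hirr]; rfl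

/-- `aₖ` is determined from `P_{k+1}` and `Qₖ`. -/
lemma cB_back (hs : s * s = D) (h1s : 1 < s) (hirr : Irrational s) (k : ℕ) (hk : 1 ≤ k) :
    cB s D k = ⌊((cP s D (k+1) : ℝ) + s) / cQ s D k⌋ := by
  obtain ⟨j, rfl⟩ : ∃ j, k = j + 1 := ⟨k - 1, by omega⟩
  obtain ⟨-, ⟨h0, h1, -⟩, h2, -⟩ := cst_inv hs h1s hirr j
  have hQ : (0:ℝ) < cQ s D (j+1) := by exact_mod_cast h0
  have hP' : (cP s D (j+1+1) : ℝ) = cB s D (j+1) * cQ s D (j+1) - cP s D (j+1) := by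
    rw [cP_succ]; push_cast; rfl
  symm
  rw [Int.floor_eq_iff, le_div_iff₀ hQ, div_lt_iff₀ hQ, hP']
  constructor <;> nlinarith

/-- Going backwards. -/
lemma cst_back (hs : s * s = D) (h1s : 1 < s) (hirr : Irrational s) (i j : ℕ)
    (hP : cP s D (i+1) = cP s D (j+1)) (hQ : cQ s D (i+1) = cQ s D (j+1)) :
    cQ s D i = cQ s D j ∧ (1 ≤ i → 1 ≤ j → cP s D i = cP s D j) := by
  have hq : cQ s D i = cQ s D j := by
    have h1 := cst_norm_succ s D i
    have h2 := cst_norm_succ s D j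
    rw [hP, hQ] at h1
    have h3 := (cQ_pos hs h1s hirr (j+1)).ne'
    apply mul_left_cancel₀ h3
    linarith
  refine ⟨hq, fun hi hj => ?_⟩
  have hb : cB s D i = cB s D j := by
    rw [cB_back hs h1s hirr i hi, cB_back hs h1s hirr j hj, hP, hq]
  have h1 := cP_succ s D i
  have h2 := cP_succ s D j
  rw [hb, hq] at h1
  linarith

lemma cst_back_iter (hs : s * s = D) (h1s : 1 < s) (hirr : Irrational s) (l i : ℕ)
    (hl : 0 < l)
    (hP : cP s D (i+1+l) = cP s D (i+1)) (hQ : cQ s D (i+1+l) = cQ s D (i+1)) :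
    cQ s D l = 1 := by
  induction i with
  | zero =>
    have h := cst_back hs h1s hirr l 0 (by rw [← hP]; congr 1; omega) (by rw [← hQ]; congr 1; omega)
    rw [h.1, cQ_zero]
  | succ i ih =>
    have e : i + 1 + 1 + l = (i + 1 + l) + 1 := by omega
    rw [e] at hP hQ
    have h := cst_back hs h1s hirr (i+1+l) (i+1) hP hQ
    exact ih (h.2 (by omega) (by omega)) h.1

lemma cst_exists (hs : s * s = D) (h1s : 1 < s) (hirr : Irrational s) :
    ∃ l, 0 < l ∧ cQ s D l = 1 := by
  have hbd : ∀ k, (cP s D (k+1), cQ s D (k+1)) ∈ (Finset.Icc 0 ⌈s⌉ ×ˢ Finset.Icc 0 ⌈2*s⌉ : Finset (ℤ × ℤ)) := by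
    intro k
    obtain ⟨-, ⟨h0, h1, h2⟩, -, -⟩ := cst_inv hs h1s hirr k
    have hp := cP_pos hs h1s hirr k
    rw [Finset.mem_product, Finset.mem_Icc, Finset.mem_Icc]
    refine ⟨⟨hp.le, ?_⟩, h0.le, ?_⟩
    · have := (h1.le.trans (Int.le_ceil s)); exact_mod_cast this
    · have : (cQ s D (k+1) : ℝ) ≤ ⌈2*s⌉ := le_trans (by linarith) (Int.le_ceil (2*s))
      exact_mod_cast this
  obtain ⟨i, j, hne, hij⟩ := Finite.exists_ne_map_eq_of_infinite
    (fun k : ℕ => (⟨_, hbd k⟩ : (Finset.Icc 0 ⌈s⌉ ×ˢ Finset.Icc 0 ⌈2*s⌉ : Finset (ℤ × ℤ))))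
  have hij' := congrArg Subtype.val hij
  simp only [Prod.mk.injEq] at hij'
  have key : ∀ i j : ℕ, i < j → cP s D (i+1) = cP s D (j+1) → cQ s D (i+1) = cQ s D (j+1) →
      ∃ l, 0 < l ∧ cQ s D l = 1 := by
    intro i j h h1 h2
    have e : j + 1 = i + 1 + (j - i) := by omega
    rw [e] at h1 h2
    exact ⟨j - i, by omega, cst_back_iter hs h1s hirr (j-i) i (by omega) h1.symm h2.symm⟩
  rcases lt_or_gt_of_ne hne with h | h
  · exact key i j h hij'.1 hij'.2
  · exact key j i h hij'.1.symm hij'.2.symm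

lemma cP_one (hs : s * s = D) (h1s : 1 < s) (hirr : Irrational s) (l : ℕ) (hl : 0 < l)
    (hQ : cQ s D l = 1) : cP s D l = ⌊s⌋ := by
  obtain ⟨j, rfl⟩ : ∃ j, l = j + 1 := ⟨l - 1, by omega⟩
  obtain ⟨-, ⟨h0, h1, -⟩, h2, -⟩ := cst_inv hs h1s hirr j
  symm
  rw [hQ] at h2
  push_cast at h2
  rw [Int.floor_eq_iff]
  constructor <;> linarith

lemma cP_first : cP s D 1 = ⌊s⌋ := by
  rw [cP_succ, cP_zero, cQ_zero]; simp [cB, cP_zero, cQ_zero]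

lemma cst_period (hs : s * s = D) (h1s : 1 < s) (hirr : Irrational s) (l : ℕ) (hl : 0 < l)
    (hQ : cQ s D l = 1) (k : ℕ) :
    cP s D (k + 1 + l) = cP s D (k+1) ∧ cQ s D (k+1+l) = cQ s D (k+1) := by
  induction k with
  | zero =>
    have hp := cP_one hs h1s hirr l hl hQ
    have hP : cP s D (l+1) = cP s D 1 := by
      rw [cP_first, cP_succ, hQ, hp]
      unfold cB
      rw [hQ, hp]
      simp
    have e : 0 + 1 + l = l + 1 := by omega
    rw [e]
    refine ⟨hP, ?_⟩
    have h1 := cst_norm_succ s D l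
    have h2 := cst_norm_succ s D 0
    rw [hQ, hP] at h1
    rw [cQ_zero] at h2
    simp only [zero_add] at *
    linarith
  | succ k ih =>
    obtain ⟨h1, h2⟩ := ih
    have e : k + 1 + 1 + l = (k + 1 + l) + 1 := by omega
    have hb : cB s D (k+1+l) = cB s D (k+1) := by unfold cB; rw [h1, h2]
    have hr : cR s D (k+1+l) = cR s D (k+1) := by
      have a1 := cst_norm s D (k+1+l)
      have a2 := cst_norm s D (k+1)
      rw [h1, h2] at a1
      apply mul_left_cancel₀ (cQ_pos hs h1s hirr (k+1)).ne'
      linarith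
    rw [e]
    constructor
    · rw [cP_succ, cP_succ s D (k+1), hb, h1, h2]
    · rw [cQ_succ, cQ_succ s D (k+1), hb, hr, h1, h2]

lemma alpha_gt (hs : s * s = D) (h1s : 1 < s) (hirr : Irrational s) (k : ℕ) :
    1 < cfAlpha s k := by
  rw [alpha_eq hs h1s hirr]
  obtain ⟨h0, h1, h2⟩ := (cst_inv hs h1s hirr k).1
  have hQ : (0:ℝ) < cQ s D k := by exact_mod_cast h0
  rw [lt_div_iff₀ hQ]; linarith

lemma alpha_rec (hs : s * s = D) (h1s : 1 < s) (hirr : Irrational s) (k : ℕ) :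
    cfAlpha s k = cfA s k + 1 / cfAlpha s (k+1) := by
  rw [cfAlpha, one_div_one_div, cfA]; ring

/-- Same partial quotients imply same complete quotients. -/
lemma alpha_unique (hs : s * s = D) (h1s : 1 < s) (hirr : Irrational s) (l : ℕ)
    (h : ∀ k : ℕ, 1 ≤ k → cfA s (k + l) = cfA s k) : cfAlpha s (1 + l) = cfAlpha s 1 := by
  have step : ∀ k, 1 ≤ k → |cfAlpha s (k + l) - cfAlpha s k| ≤
      1 / 4 * |cfAlpha s (k + 2 + l) - cfAlpha s (k + 2)| := by
    intro k hk
    have g := alpha_gt hs h1s hirr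
    have r := alpha_rec hs h1s hirr
    have aux : ∀ k, 2 < cfAlpha s k * cfAlpha s (k+1) := by
      intro k
      have hA : (1:ℝ) ≤ cfA s k := by
        have : (1:ℤ) ≤ cfA s k := by
          rw [cfA, Int.le_floor]; exact_mod_cast (g k).le
        exact_mod_cast this
      have h1 := g (k+1)
      rw [r k, add_mul, one_div_mul_cancel (by linarith)]
      nlinarith
    have x0 := r (k + l)
    have x1 := r (k + 1 + l)
    have y0 := r k
    have y1 := r (k+1)
    have a1 := aux (k+1+l)
    have a2 := aux (k+1)
    rw [h k hk] at x0
    rw [h (k+1) (by omega)] at x1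
    have e1 : k + l + 1 = k + 1 + l := by omega
    have e2 : k + 1 + l + 1 = k + 2 + l := by omega
    rw [e1] at x0
    rw [e2] at x1 a1
    have gx1 := g (k+1+l)
    have gx2 := g (k+2+l)
    have gy1 := g (k+1)
    have gy2 := g (k+1+1)
    have e3 : k + 1 + 1 = k + 2 := rfl
    rw [e3] at *
    generalize cfAlpha s (k+l) = u0 at *
    generalize cfAlpha s (k+1+l) = u1 at *
    generalize cfAlpha s (k+2+l) = u2 at *
    generalize cfAlpha s (k) = v0 at *
    generalize cfAlpha s (k+1) = v1 at *
    generalize cfAlpha s (k+2) = v2 at *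
    have hu1 : u1 * u2 = cfA s (k+1) * u2 + 1 := by rw [x1]; field_simp
    have hv1 : v1 * v2 = cfA s (k+1) * v2 + 1 := by rw [y1]; field_simp
    have hd : u0 - v0 = (u2 - v2) / ((u1 * u2) * (v1 * v2)) := by
      have d1 : u0 - v0 = (v1 - u1) / (u1 * v1) := by rw [x0, y0]; field_simp; ring
      have d2 : v1 - u1 = (u2 - v2) / (u2 * v2) := by rw [x1, y1]; field_simp; ring
      rw [d1, d2]; field_simp
    rw [hd, abs_div]
    have hpos : 4 ≤ (u1 * u2) * (v1 * v2) := by nlinarith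
    rw [abs_of_pos (by linarith : 0 < (u1 * u2) * (v1 * v2)), div_le_iff₀ (by linarith)]
    have := abs_nonneg (u2 - v2)
    nlinarith
  have bd : ∀ k, 1 ≤ k → |cfAlpha s (k + l) - cfAlpha s k| ≤ 1 := by
    intro k hk
    exact (Int.abs_sub_lt_one_of_floor_eq_floor (h k hk)).le
  have it : ∀ n k, 1 ≤ k → |cfAlpha s (k + l) - cfAlpha s k| ≤ (1/4 : ℝ)^n := by
    intro n
    induction n with
    | zero => intro k hk; simpa using bd k hk
    | succ n ih =>
      intro k hk
      refine (step k hk).trans ?_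
      have := ih (k+2) (by omega)
      rw [pow_succ]; linarith
  have lim : |cfAlpha s (1 + l) - cfAlpha s 1| ≤ 0 :=
    ge_of_tendsto' (tendsto_pow_atTop_nhds_zero_of_lt_one (by norm_num) (by norm_num))
      (fun n => it n 1 le_rfl)
  exact sub_eq_zero.mp (abs_nonpos_iff.mp lim)

lemma period_set (hs : s * s = D) (h1s : 1 < s) (hirr : Irrational s) (l : ℕ) :
    (0 < l ∧ ∀ k : ℕ, 1 ≤ k → cfA s (k + l) = cfA s k) ↔ (0 < l ∧ cQ s D l = 1) := by
  refine and_congr_right fun hl => ⟨fun h => ?_, fun h k hk => ?_⟩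
  · have h1 := alpha_unique hs h1s hirr l h
    rw [alpha_eq hs h1s hirr, alpha_eq hs h1s hirr] at h1
    obtain ⟨h2, h3⟩ := irr_pair hirr (cQ_pos hs h1s hirr _) (cQ_pos hs h1s hirr _) h1
    exact cst_back_iter hs h1s hirr l 0 hl (by simpa using h2) (by simpa using h3)
  · obtain ⟨j, rfl⟩ : ∃ j, k = j + 1 := ⟨k - 1, by omega⟩
    obtain ⟨h1, h2⟩ := cst_period hs h1s hirr l hl h j
    rw [cfA_eq hs h1s hirr, cfA_eq hs h1s hirr]
    unfold cB
    rw [h1, h2]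

lemma period_spec (hs : s * s = D) (h1s : 1 < s) (hirr : Irrational s) :
    0 < cfPeriod s ∧ cQ s D (cfPeriod s) = 1 ∧
      ∀ m, 0 < m → m < cfPeriod s → cQ s D m ≠ 1 := by
  have e : cfPeriod s = sInf {l : ℕ | 0 < l ∧ cQ s D l = 1} := by
    unfold cfPeriod
    congr 1
    ext l
    exact period_set hs h1s hirr l
  have hm := Nat.sInf_mem (s := {l : ℕ | 0 < l ∧ cQ s D l = 1}) (cst_exists hs h1s hirr)
  rw [← e] at hm
  refine ⟨hm.1, hm.2, fun m h0 h1 h2 => ?_⟩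
  rw [e] at h1
  exact Nat.notMem_of_lt_sInf h1 ⟨h0, h2⟩

lemma cst_symm (hs : s * s = D) (h1s : 1 < s) (hirr : Irrational s) (l : ℕ)
    (hQ : cQ s D l = 1) (k : ℕ) (hk : k < l) :
    cQ s D (l - k) = cQ s D k ∧ cP s D (l - k) = cP s D (k + 1) := by
  induction k with
  | zero =>
    exact ⟨by simpa [cQ_zero] using hQ, by
      rw [zero_add, cP_first]; exact cP_one hs h1s hirr l hk hQ⟩
  | succ k ih =>
    obtain ⟨h1, h2⟩ := ih (by omega)
    obtain ⟨j, hj⟩ : ∃ j, l - (k + 1) = j := ⟨_, rfl⟩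
    have e : l - k = j + 1 := by omega
    rw [e] at h1 h2
    rw [hj]
    have n1 := cst_norm_succ s D j
    have n2 := cst_norm_succ s D k
    rw [h1, h2] at n1
    have hq : cQ s D j = cQ s D (k+1) := by
      apply mul_left_cancel₀ (cQ_pos hs h1s hirr k).ne'
      linarith
    refine ⟨hq, ?_⟩
    have hb : cB s D j = cB s D (k+1) := by
      rw [cB_back hs h1s hirr j (by omega), h2, hq]; rfl
    have p1 := cP_succ s D j
    have p2 := cP_succ s D (k+1)
    rw [hb, hq, h2] at p1
    linarith

end

lemma sq_mod8 (x : ℤ) (h : x % 2 = 1) : (x * x) % 8 = 1 := by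
  have : x % 8 = 1 ∨ x % 8 = 3 ∨ x % 8 = 5 ∨ x % 8 = 7 := by omega
  rcases this with h | h | h | h <;> simp [Int.mul_emod, h]

lemma sq_mod4 (x : ℤ) : ((x * x) % 4 = 0 ∧ x % 2 = 0) ∨ ((x * x) % 4 = 1 ∧ x % 2 = 1) := by
  have : x % 4 = 0 ∨ x % 4 = 1 ∨ x % 4 = 2 ∨ x % 4 = 3 := by omega
  rcases this with h | h | h | h <;> simp [Int.mul_emod, h] <;> omega

/-- The odd case. -/
lemma odd_case {s : ℝ} {D : ℤ} (hs : s * s = D) (h1s : 1 < s) (hirr : Irrational s) (m : ℕ)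
    (hQ : cQ s D (2 * m + 1) = 1) : D % 4 ≠ 3 := by
  have h := (cst_symm hs h1s hirr (2*m+1) hQ m (by omega)).1
  have e : 2 * m + 1 - m = m + 1 := by omega
  rw [e] at h
  have n := cst_norm_succ s D m
  rw [h] at n
  have a1 := sq_mod4 (cP s D (m+1))
  have a2 := sq_mod4 (cQ s D m)
  omega

/-- The even case. -/
lemma even_case {s : ℝ} {p : ℕ} (hp : p.Prime) (hs : s * s = ((p : ℤ) : ℝ)) (h1s : 1 < s)
    (hirr : Irrational s) (m : ℕ) (hm : 0 < m)
    (hQ : cQ s p (2 * m) = 1) (hQm : cQ s p m ≠ 1) :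
    (Even m ∧ p % 8 = 7) ∨ (¬ Even m ∧ p % 8 = 3) := by
  have hP := (cst_symm hs h1s hirr (2*m) hQ m (by omega)).2
  have e : 2 * m - m = m := by omega
  rw [e] at hP
  have hB := cP_succ s p m
  rw [← hP] at hB
  obtain ⟨A, B, -, -, hAB, -, -⟩ := cst_conv s p m
  obtain ⟨j, rfl⟩ : ∃ j, m = j + 1 := ⟨m - 1, by omega⟩
  have n := cst_norm_succ s p j
  have q0 := cQ_pos hs h1s hirr j
  have q1 := cQ_pos hs h1s hirr (j+1)
  have p1 := cP_pos hs h1s hirr j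
  generalize cQ s p (j+1) = Q at *
  generalize cQ s p j = Q' at *
  generalize cP s p (j+1) = P at *
  generalize cB s p (j+1) = b at *
  have hlt : Q < p := by nlinarith
  have hdvd : Q ∣ 4 * (p : ℤ) := ⟨4 * Q' + b * (b * Q), by
    have : 2 * P = b * Q := by linarith
    linear_combination 4 * n + (2 * P + b * Q) * this⟩
  have hpp : Prime (p : ℤ) := Nat.prime_iff_prime_int.mp hp
  have hcop : IsCoprime Q (p : ℤ) := by
    rw [isCoprime_comm, Prime.coprime_iff_not_dvd hpp]
    intro hd
    have := Int.le_of_dvd q1 hd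
    omega
  have hd4 : Q ∣ 4 := hcop.dvd_of_dvd_mul_right hdvd
  have hp4 : ¬ (4 ∣ p) := by
    intro h
    have h2 : 2 ∣ p := dvd_trans (by norm_num) h
    have := (Nat.prime_dvd_prime_iff_eq Nat.prime_two hp).mp h2
    omega
  have hQ2 : Q = 2 := by
    have hle := Int.le_of_dvd (by norm_num) hd4
    have : Q ≠ 3 := by rintro rfl; omega
    have : Q ≠ 4 := by
      rintro rfl
      have := sq_mod4 P
      omega
    omega
  subst hQ2
  have hodd : p % 2 = 1 := by
    rcases hp.eq_two_or_odd with h | h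
    · omega
    · exact h
  have hA4 := sq_mod4 A
  have hB4 := sq_mod4 B
  -- `B` is odd
  rcases Nat.even_or_odd (j+1) with hev | hod
  · left
    refine ⟨hev, ?_⟩
    rw [hev.neg_one_pow] at hAB
    have hpar : A % 2 = 1 ∧ B % 2 = 1 := by
      rcases hB4 with ⟨u, v⟩ | ⟨u, v⟩
      · obtain ⟨c, hc⟩ : (4:ℤ) ∣ B * B := Int.dvd_of_emod_eq_zero u
        rw [hc, show (p:ℤ) * (4 * c) = 4 * (p * c) by ring] at hAB
        omega
      · refine ⟨?_, v⟩
        by_contra hA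
        obtain ⟨c, hc⟩ : ∃ c, B * B = 2 * c + 1 := ⟨(B * B) / 2, by omega⟩
        rw [hc, show (p:ℤ) * (2 * c + 1) = 2 * (p * c) + p by ring] at hAB
        omega
    have a8 := sq_mod8 A hpar.1
    have b8 := sq_mod8 B hpar.2
    obtain ⟨c, hc⟩ : ∃ c, B * B = 8 * c + 1 := ⟨(B * B) / 8, by omega⟩
    rw [hc, show (p:ℤ) * (8 * c + 1) = 8 * (p * c) + p by ring] at hAB
    omega
  · right
    refine ⟨by rwa [Nat.not_even_iff_odd], ?_⟩
    rw [hod.neg_one_pow] at hAB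
    have hpar : A % 2 = 1 ∧ B % 2 = 1 := by
      rcases hB4 with ⟨u, v⟩ | ⟨u, v⟩
      · obtain ⟨c, hc⟩ : (4:ℤ) ∣ B * B := Int.dvd_of_emod_eq_zero u
        rw [hc, show (p:ℤ) * (4 * c) = 4 * (p * c) by ring] at hAB
        omega
      · refine ⟨?_, v⟩
        by_contra hA
        obtain ⟨c, hc⟩ : ∃ c, B * B = 2 * c + 1 := ⟨(B * B) / 2, by omega⟩
        rw [hc, show (p:ℤ) * (2 * c + 1) = 2 * (p * c) + p by ring] at hAB
        omega
    have a8 := sq_mod8 A hpar.1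
    have b8 := sq_mod8 B hpar.2
    obtain ⟨c, hc⟩ : ∃ c, B * B = 8 * c + 1 := ⟨(B * B) / 8, by omega⟩
    rw [hc, show (p:ℤ) * (8 * c + 1) = 8 * (p * c) + p by ring] at hAB
    omega

theorem stmt_9 (p : ℕ) (hp : p.Prime) :
    (Even (cfPeriod (Real.sqrt p)) ↔ p % 4 = 3) ∧
      (4 ∣ cfPeriod (Real.sqrt p) ↔ p % 8 = 7) := by
  have hs : Real.sqrt p * Real.sqrt p = ((p : ℤ) : ℝ) := by
    rw [Real.mul_self_sqrt (Nat.cast_nonneg p)]; norm_cast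
  have h1s : 1 < Real.sqrt p := by
    rw [Real.lt_sqrt (by norm_num)]
    have := hp.one_lt
    norm_num
    exact this
  have hirr : Irrational (Real.sqrt p) := hp.irrational_sqrt
  obtain ⟨hl, hQ, hmin⟩ := period_spec hs h1s hirr
  rcases Nat.even_or_odd' (cfPeriod (Real.sqrt p)) with ⟨m, hm | hm⟩
  · rw [hm] at hQ hl
    have h := even_case hp hs h1s hirr m (by omega) hQ (hmin m (by omega) (by omega))
    rw [hm]
    rw [Nat.even_iff] at h ⊢
    omega
  · rw [hm] at hQ
    have h := odd_case hs h1s hirr m hQ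
    rw [hm, Nat.even_iff]
    omega
end

section
/- Let L ≥ 2 and let a, a₁, …, a_{L−1} be positive integers with a ≥ 3. Let x > 1 be the real number whose continued fraction expansion is the eventually periodic expansion x = [a; \overline{a₁, …, a_{L−1}, a, a_{L−1}, …, a₁, 2a}] (the period as written, not necessarily minimal). Write R = q_{L−1}(a₁, …, a_{L−1}), S = q_{L−2}(a₁, …, a_{L−2}), T = q_{L−2}(a₂, …, a_{L−1}), U = q_{L−3}(a₂, …, a_{L−2}). Then x² = a² + 2a·T/R + (T² + 2·(−1)^{L−1})/R² + 2·(−1)^{L−1}·(T − 2S)/(R²·(aR + 2S)). -/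
/-- Shifted continuant polynomials: `contq x (n+1) = qₙ(x 1, …, x n)`, where
`q₋₁ = 0`, `q₀ = 1`, and `qₙ = xₙ·q_{n−1} + q_{n−2}`.  Thus `contq x 0 = q₋₁ = 0`
and `contq x 1 = q₀ = 1`. -/
def contq (x : ℕ → ℤ) : ℕ → ℤ
  | 0 => 0
  | 1 => 1
  | n + 2 => x (n + 1) * contq x (n + 1) + contq x n

lemma cf_step (x : ℝ) (k : ℕ) : cfAlpha x k = cfA x k + 1 / cfAlpha x (k + 1) := by
  simp [cfAlpha, cfA]

/-- Contraction: two expansions with equal positive partial quotients. -/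
lemma cf_unique_aux (u v : ℕ → ℝ) (b : ℕ → ℤ) (hb : ∀ k, 1 ≤ b k)
    (hu : ∀ k, u k = b k + 1 / u (k + 1)) (hv : ∀ k, v k = b k + 1 / v (k + 1))
    (hu1 : ∀ k, ⌊u k⌋ = b k) (hv1 : ∀ k, ⌊v k⌋ = b k) (n : ℕ) :
    ∀ k, |u k - v k| ≤ (1 / 4) ^ n := by
  have key : ∀ (w : ℕ → ℝ), (∀ k, w k = b k + 1 / w (k + 1)) → (∀ k, ⌊w k⌋ = b k) →
      ∀ k, 1 ≤ w k ∧ 2 ≤ w k * w (k + 1) := by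
    intro w hw hw1
    have h1 : ∀ k, 1 ≤ w k := by
      intro k
      have h := Int.floor_le (w k)
      rw [hw1 k] at h
      have : (1 : ℝ) ≤ b k := by exact_mod_cast hb k
      linarith
    intro k
    refine ⟨h1 k, ?_⟩
    have h2 := h1 (k + 1)
    have hb' : (1 : ℝ) ≤ b k := by exact_mod_cast hb k
    have e : w k * w (k + 1) = b k * w (k + 1) + 1 := by
      rw [hw k]; field_simp
    rw [e]; nlinarith
  have step : ∀ k, u (k + 1) - v (k + 1) = (v k - u k) * (u (k + 1) * v (k + 1)) := by
    intro k
    have h2 := (key u hu hu1 (k + 1)).1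
    have h3 := (key v hv hv1 (k + 1)).1
    rw [hu k, hv k]; field_simp; ring
  induction n with
  | zero =>
    intro k
    rw [pow_zero]
    exact (Int.abs_sub_lt_one_of_floor_eq_floor ((hu1 k).trans (hv1 k).symm)).le
  | succ n ih =>
    intro k
    have h0 := ih (k + 2)
    have e : u (k + 2) - v (k + 2) =
        (u k - v k) * ((u (k + 1) * u (k + 1 + 1)) * (v (k + 1) * v (k + 1 + 1))) := by
      have e1 := step (k + 1)
      have e2 := step k
      rw [show k + 2 = k + 1 + 1 from rfl, e1,
        show v (k + 1) - u (k + 1) = -(u (k + 1) - v (k + 1)) by ring, e2]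
      ring
    have a1 := (key u hu hu1 (k + 1)).2
    have a2 := (key v hv hv1 (k + 1)).2
    have a3 : 4 ≤ (u (k + 1) * u (k + 1 + 1)) * (v (k + 1) * v (k + 1 + 1)) := by nlinarith
    rw [e, abs_mul, abs_of_nonneg (by linarith :
      0 ≤ (u (k + 1) * u (k + 1 + 1)) * (v (k + 1) * v (k + 1 + 1)))] at h0
    have a4 := mul_le_mul_of_nonneg_left a3 (abs_nonneg (u k - v k))
    rw [pow_succ]
    linarith

lemma cf_unique (u v : ℕ → ℝ) (b : ℕ → ℤ) (hb : ∀ k, 1 ≤ b k)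
    (hu : ∀ k, u k = b k + 1 / u (k + 1)) (hv : ∀ k, v k = b k + 1 / v (k + 1))
    (hu1 : ∀ k, ⌊u k⌋ = b k) (hv1 : ∀ k, ⌊v k⌋ = b k) (k : ℕ) : u k = v k := by
  have h : |u k - v k| ≤ 0 := by
    refine ge_of_tendsto' (tendsto_pow_atTop_nhds_zero_of_lt_one (r := (1 / 4 : ℝ))
      (by norm_num) (by norm_num)) (fun n => ?_)
    exact cf_unique_aux u v b hb hu hv hu1 hv1 n k
  have := abs_nonpos_iff.mp h
  linarith

lemma forward_rel (c : ℕ → ℤ) (w : ℕ → ℝ) (m : ℕ)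
    (hw : ∀ i, 1 ≤ i → i ≤ m + 1 → w i = c i + 1 / w (i + 1))
    (h0 : ∀ i, 1 ≤ i → i ≤ m + 2 → w i ≠ 0) :
    w 1 * ((contq (fun i => c (i + 1)) (m + 1) : ℝ) * w (m + 2) + contq (fun i => c (i + 1)) m)
      = contq c (m + 2) * w (m + 2) + contq c (m + 1) := by
  induction m with
  | zero =>
    have := hw 1 le_rfl (by omega)
    have h2 := h0 2 (by omega) (by omega)
    simp only [contq]
    rw [this]; field_simp; push_cast; ring_nf
  | succ m ih =>
    have ih' := ih (fun i h1 h2 => hw i h1 (by omega)) (fun i h1 h2 => h0 i h1 (by omega))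
    have h3 := hw (m + 2) (by omega) (by omega)
    have h4 := h0 (m + 2 + 1) (by omega) (by omega)
    rw [show contq c (m + 1 + 2) = c (m + 2) * contq c (m + 2) + contq c (m + 1) from rfl,
      show contq (fun i => c (i + 1)) (m + 1 + 1) = c (m + 2) *
        contq (fun i => c (i + 1)) (m + 1) + contq (fun i => c (i + 1)) m from rfl]
    have h5 : w (m + 2) * w (m + 2 + 1) = c (m + 2) * w (m + 2 + 1) + 1 := by
      rw [h3]; field_simp
    push_cast
    rw [show m + 1 + 2 = m + 2 + 1 from rfl, show m + 1 + 1 = m + 2 from rfl]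
    linear_combination w (m + 2 + 1) * ih' - (w 1 * contq (fun i => c (i + 1)) (m + 1)
      - contq c (m + 2)) * h5

lemma backward_rel (c : ℕ → ℤ) (g : ℕ → ℝ) (m : ℕ)
    (hg : ∀ i, i ≤ m → g (i + 1) = c (i + 1) + 1 / g i)
    (h0 : ∀ i, i ≤ m → g i ≠ 0) :
    g (m + 1) * ((contq c (m + 1) : ℝ) * g 0 + contq (fun i => c (i + 1)) m)
      = contq c (m + 2) * g 0 + contq (fun i => c (i + 1)) (m + 1) := by
  induction m with
  | zero =>
    have := hg 0 le_rfl
    have h2 := h0 0 le_rfl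
    simp only [contq]
    rw [this]; field_simp; push_cast; ring_nf
  | succ m ih =>
    have ih' := ih (fun i h1 => hg i (by omega)) (fun i h1 => h0 i (by omega))
    have h3 := hg (m + 1) le_rfl
    have h4 := h0 (m + 1) le_rfl
    rw [show contq c (m + 1 + 2) = c (m + 2) * contq c (m + 2) + contq c (m + 1) from rfl,
      show contq (fun i => c (i + 1)) (m + 1 + 1) = c (m + 2) *
        contq (fun i => c (i + 1)) (m + 1) + contq (fun i => c (i + 1)) m from rfl]
    have h5 : g (m + 1 + 1) * g (m + 1) = c (m + 2) * g (m + 1) + 1 := by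
      rw [h3]; field_simp
    push_cast
    rw [show m + 1 + 1 = m + 2 from rfl] at *
    linear_combination (c (m + 2) - g (m + 2)) * ih' + ((contq c (m + 1) : ℝ) * g 0
      + contq (fun i => c (i + 1)) m) * h5

lemma contq_det (c : ℕ → ℤ) (m : ℕ) :
    contq c (m + 2) * contq (fun i => c (i + 1)) m
      - contq c (m + 1) * contq (fun i => c (i + 1)) (m + 1) = (-1) ^ (m + 1) := by
  induction m with
  | zero => simp [contq]
  | succ m ih =>
    rw [show contq c (m + 1 + 2) = c (m + 2) * contq c (m + 2) + contq c (m + 1) from rfl,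
      show contq (fun i => c (i + 1)) (m + 1 + 1) = c (m + 2) *
        contq (fun i => c (i + 1)) (m + 1) + contq (fun i => c (i + 1)) m from rfl,
      show m + 1 + 1 = m + 2 from rfl]
    rw [show (-1 : ℤ) ^ (m + 2) = - (-1) ^ (m + 1) by ring]
    linear_combination -ih

lemma contq_pos (c : ℕ → ℤ) (m : ℕ) (hc : ∀ i, 1 ≤ i → i ≤ m → 0 < c i) :
    0 < contq c (m + 1) ∧ 0 ≤ contq c m := by
  induction m with
  | zero => simp [contq]
  | succ m ih =>
    have ih' := ih (fun i h1 h2 => hc i h1 (by omega))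
    refine ⟨?_, ih'.1.le⟩
    rw [show contq c (m + 1 + 1) = c (m + 1) * contq c (m + 1) + contq c m from rfl]
    have := mul_pos (hc (m + 1) (by omega) le_rfl) ih'.1
    linarith [ih'.2]

theorem stmt_11 (L : ℕ) (hL : 2 ≤ L) (a : ℤ) (ha : 3 ≤ a) (c : ℕ → ℤ)
    (hc : ∀ i : ℕ, 1 ≤ i → i ≤ L - 1 → 0 < c i)
    (x : ℝ) (hx : 1 < x) (hx0 : cfA x 0 = a)
    -- the partial quotients of x are periodic with the (not necessarily minimal)
    -- period (a₁, …, a_{L−1}, a, a_{L−1}, …, a₁, 2a) of length 2L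
    (hper : ∀ k : ℕ, 1 ≤ k → cfA x k =
      (fun j : ℕ => if j < L then c j else if j = L then a
        else if j < 2 * L then c (2 * L - j) else 2 * a) ((k - 1) % (2 * L) + 1)) :
    x ^ 2 =
      (a : ℝ) ^ 2
        + 2 * (a : ℝ) * (contq (fun i => c (i + 1)) (L - 1) : ℝ) / (contq c L : ℝ)
        + ((contq (fun i => c (i + 1)) (L - 1) : ℝ) ^ 2 + 2 * (-1 : ℝ) ^ (L - 1))
            / (contq c L : ℝ) ^ 2
        + 2 * (-1 : ℝ) ^ (L - 1)
            * ((contq (fun i => c (i + 1)) (L - 1) : ℝ) - 2 * (contq c (L - 1) : ℝ))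
            / ((contq c L : ℝ) ^ 2
                * ((a : ℝ) * (contq c L : ℝ) + 2 * (contq c (L - 1) : ℝ))) := by
  obtain ⟨m, rfl⟩ : ∃ m, L = m + 2 := ⟨L - 2, by omega⟩
  simp only [show m + 2 - 1 = m + 1 from rfl] at hc ⊢
  have hone : ∀ k, 1 ≤ cfA x (k + 1) := by
    intro k
    rw [hper (k + 1) (by omega)]
    have hlt := Nat.mod_lt (k + 1 - 1) (show 2 * (m + 2) > 0 by omega)
    generalize (k + 1 - 1) % (2 * (m + 2)) = r at *
    simp only
    split_ifs with h1 h2 h3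
    · exact hc _ (by omega) (by omega)
    · omega
    · exact hc _ (by omega) (by omega)
    · omega
  have hpos : ∀ k, 0 < cfAlpha x (k + 1) := by
    intro k
    have h := Int.floor_le (cfAlpha x (k + 1))
    have h1 : (1 : ℝ) ≤ cfA x (k + 1) := by exact_mod_cast hone k
    have h2 : (cfA x (k + 1) : ℝ) ≤ cfAlpha x (k + 1) := h
    linarith
  have hP : ∀ k, cfA x (k + 2 * (m + 2) + 1) = cfA x (k + 1) := by
    intro k
    rw [hper _ (by omega), hper (k + 1) (by omega)]
    simp only [Nat.add_sub_cancel, Nat.add_mod_right]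
  have hper1 : cfAlpha x (2 * (m + 2) + 1) = cfAlpha x 1 := by
    have := cf_unique (fun k => cfAlpha x (k + 2 * (m + 2) + 1)) (fun k => cfAlpha x (k + 1))
      (fun k => cfA x (k + 1)) hone
      (fun k => by
        have h := cf_step x (k + 2 * (m + 2) + 1)
        rw [hP k] at h
        rw [show k + 1 + 2 * (m + 2) + 1 = k + 2 * (m + 2) + 1 + 1 by ring]
        exact h)
      (fun k => cf_step x (k + 1)) (fun k => hP k) (fun k => rfl) 0
    simpa using this
  have hv1 : ∀ i, 1 ≤ i → i ≤ m + 1 → cfA x i = c i := by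
    intro i h1 h2
    rw [hper i h1, Nat.mod_eq_of_lt (by omega), Nat.sub_add_cancel h1]
    simp only
    rw [if_pos (by omega)]
  have hv2 : cfA x (m + 2) = a := by
    rw [hper _ (by omega), Nat.mod_eq_of_lt (by omega), Nat.sub_add_cancel (by omega)]
    simp
  have hv3 : ∀ i, i ≤ m → cfA x (2 * (m + 2) - (i + 1)) = c (i + 1) := by
    intro i h1
    rw [hper _ (by omega), Nat.mod_eq_of_lt (by omega), Nat.sub_add_cancel (by omega)]
    simp only
    rw [if_neg (by omega), if_neg (by omega), if_pos (by omega)]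
    congr 1; omega
  have hv4 : cfA x (2 * (m + 2)) = 2 * a := by
    rw [hper _ (by omega), Nat.mod_eq_of_lt (by omega), Nat.sub_add_cancel (by omega)]
    simp only
    rw [if_neg (by omega), if_neg (by omega), if_neg (by omega)]
  have hne : ∀ i, 1 ≤ i → cfAlpha x i ≠ 0 := by
    intro i hi
    obtain ⟨j, rfl⟩ : ∃ j, i = j + 1 := ⟨i - 1, by omega⟩
    exact (hpos j).ne'
  have F := forward_rel c (cfAlpha x) m
    (fun i h1 h2 => by rw [← hv1 i h1 h2]; exact cf_step x i) (fun i h1 _ => hne i h1)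
  have B := backward_rel c (fun i => cfAlpha x (2 * (m + 2) - i)) m
    (fun i h1 => by
      have h := cf_step x (2 * (m + 2) - (i + 1))
      rw [hv3 i h1, show 2 * (m + 2) - (i + 1) + 1 = 2 * (m + 2) - i by omega] at h
      exact h)
    (fun i h1 => hne _ (by omega))
  have D : ((contq c (m + 2) : ℝ) * contq (fun i => c (i + 1)) m
      - contq c (m + 1) * contq (fun i => c (i + 1)) (m + 1)) = (-1) ^ (m + 1) := by
    exact_mod_cast contq_det c m
  have hR := contq_pos c (m + 1) hc
  have hR1 : (0 : ℝ) < contq c (m + 2) := by exact_mod_cast hR.1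
  have hS1 : (0 : ℝ) ≤ contq c (m + 1) := by exact_mod_cast hR.2
  have ha1 : (3 : ℝ) ≤ a := by exact_mod_cast ha
  have e0 := cf_step x 0
  rw [hx0] at e0
  change x = a + 1 / cfAlpha x 1 at e0
  have eL := cf_step x (m + 2)
  rw [hv2] at eL
  have e2 := cf_step x (2 * (m + 2))
  rw [hv4, hper1] at e2
  have n1 := hne 1 le_rfl
  have n2 := hne (m + 2 + 1) (by omega)
  simp only [show 2 * (m + 2) - (m + 1) = m + 2 + 1 by omega, Nat.sub_zero] at B
  have ey : cfAlpha x (2 * (m + 2)) = x + a := by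
    rw [e2]; push_cast; linarith
  rw [ey] at B
  generalize cfAlpha x 1 = p at *
  generalize cfAlpha x (m + 2) = w at *
  generalize cfAlpha x (m + 2 + 1) = q at *
  generalize (contq c (m + 2) : ℝ) = R at *
  generalize (contq c (m + 1) : ℝ) = S at *
  generalize (contq (fun i => c (i + 1)) (m + 1) : ℝ) = T at *
  generalize (contq (fun i => c (i + 1)) m : ℝ) = U at *
  rw [← D]
  have f0 : (x - a) * p = 1 := by rw [e0]; field_simp; ring
  have fL : w * q = a * q + 1 := by rw [eL]; field_simp
  have g1 : (x - a) * (R * w + S) = T * w + U := by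
    linear_combination (T * w + U) * f0 - (x - a) * F
  have g2 : w * (R * (x + a) + T) = a * (R * (x + a) + T) + (S * (x + a) + U) := by
    linear_combination (S * (x + a) + U) * fL + (a - w) * B
  have hden : 0 < (a : ℝ) * R + 2 * S := by nlinarith
  have main : (x ^ 2 - a ^ 2) * (R * (a * R + 2 * S)) =
      2 * a * (a * R * T + R * U + S * T) + a * T ^ 2 + 2 * T * U := by
    linear_combination (R * (x + a) + T) * g1 - ((x - a) * R - T) * g2
  have hx2 : x ^ 2 = a ^ 2 +
      (2 * a * (a * R * T + R * U + S * T) + a * T ^ 2 + 2 * T * U) / (R * (a * R + 2 * S)) := by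
    rw [← main]; field_simp; ring
  rw [hx2]
  field_simp
  ring
end

section
/- Let L ≥ 2 and let a, a₁, …, a_{L−1} be positive integers with a ≥ 3, and let x > 1 be the real number whose continued fraction expansion is x = [a; \overline{a₁, …, a_{L−1}, a, a_{L−1}, …, a₁, 2a}]. If x² is an integer, then q_{L−2}(a₂, …, a_{L−1}) = 2·q_{L−2}(a₁, …, a_{L−2}). -/
def contR (x : ℕ → ℤ) : ℕ → ℤ
  | 0 => 1
  | 1 => 0
  | n + 2 => x (n + 1) * contR x (n + 1) + contR x n

theorem contR_eq (c : ℕ → ℤ) (n : ℕ) :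
    contR c (n + 1) = contq (fun i => c (i + 1)) n ∧
    contR c (n + 2) = contq (fun i => c (i + 1)) (n + 1) := by
  induction n with
  | zero => simp [contR, contq]
  | succ k ih =>
    refine ⟨ih.2, ?_⟩
    rw [contR, contq, ih.1, ih.2]

theorem cont_det (c : ℕ → ℤ) (n : ℕ) :
    contq c (n + 1) * contR c n - contq c n * contR c (n + 1) = 1 ∨
    contq c (n + 1) * contR c n - contq c n * contR c (n + 1) = -1 := by
  induction n with
  | zero => simp [contR, contq]
  | succ k ih =>
    rw [contR, contq]
    rcases ih with h | h
    · right; linarith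
    · left; linarith

theorem cont_bounds (c : ℕ → ℤ) (N : ℕ) (hc : ∀ i, 1 ≤ i → i ≤ N → 0 < c i) (n : ℕ) :
    n ≤ N → 0 ≤ contq c n ∧ 0 ≤ contR c n ∧ 0 < contq c (n + 1) ∧ 0 ≤ contR c (n + 1) ∧
      contq c n ≤ contq c (n + 1) ∧ contR c (n + 1) ≤ contq c (n + 1) ∧
      (1 ≤ n → contR c n ≤ contq c n) ∧ (n = 0 → contR c n = 1) := by
  induction n with
  | zero => intro _; simp [contR, contq]
  | succ k ih =>
    intro hk
    obtain ⟨h1, h2, h3, h4, h5, h6, h7, h8⟩ := ih (by omega)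
    have hp := hc (k + 1) (by omega) hk
    rw [contR, contq]
    have e1 : contq c (k + 1) ≤ c (k + 1) * contq c (k + 1) := by nlinarith
    have e2 : c (k + 1) * contR c (k + 1) ≤ c (k + 1) * contq c (k + 1) := by nlinarith
    have e3 : 0 ≤ c (k + 1) * contR c (k + 1) := by positivity
    refine ⟨h3.le, h4, by linarith, by linarith, by linarith, ?_, fun _ => h6, by omega⟩
    rcases Nat.eq_zero_or_pos k with rfl | hk0
    · simp [contR, contq]; exact hp
    · linarith [h7 hk0]

theorem final_int (K B C D a m : ℤ) (ha : 3 ≤ a) (hK : 0 < K) (hB : 0 ≤ B) (hC : 0 ≤ C)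
    (hBK : B ≤ K) (hCK : C ≤ K)
    (hdet : K * D - B * C = 1 ∨ K * D - B * C = -1)
    (h : (K * (a * K + 2 * B)) * m = 2 * a * (a * K * C + B * C + K * D) + a * C ^ 2 + 2 * C * D) :
    C = 2 * B := by
  have hdvd : (a * K + 2 * B) ∣ 2 * (C - 2 * B) := by
    rcases hdet with hd | hd
    · have hD : K * D = B * C + 1 := by linarith
      refine ⟨K ^ 2 * m - 2 * a * C * K - C ^ 2 - 2, ?_⟩
      linear_combination (-K) * h - (2 * a * K + 2 * C) * hD
    · have hD : K * D = B * C - 1 := by linarith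
      refine ⟨-(K ^ 2 * m - 2 * a * C * K - C ^ 2 + 2), ?_⟩
      linear_combination (K) * h + (2 * a * K + 2 * C) * hD
  have h3 : 3 * K ≤ a * K := by nlinarith
  have := Int.eq_zero_of_abs_lt_dvd hdvd (by rw [abs_lt]; constructor <;> linarith)
  linarith

theorem cf_unique_s12 (α β : ℕ → ℝ) (b : ℕ → ℝ) (hb : ∀ k, 1 ≤ b k)
    (hα : ∀ k, α k * α (k + 1) = b k * α (k + 1) + 1)
    (hβ : ∀ k, β k * β (k + 1) = b k * β (k + 1) + 1)
    (hα1 : ∀ k, 1 ≤ α k) (hβ1 : ∀ k, 1 ≤ β k) (hd : ∀ k, |α k - β k| ≤ 1) : α 0 = β 0 := by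
  have step : ∀ k, 4 * |α k - β k| ≤ |α (k + 2) - β (k + 2)| := by
    intro k
    have s : ∀ k, α (k + 1) - β (k + 1) = -(α (k + 1) * β (k + 1)) * (α k - β k) := by
      intro k
      linear_combination (β (k + 1)) * hα k - (α (k + 1)) * hβ k
    have e : α (k + 2) - β (k + 2) =
        ((α (k + 1) * α (k + 2)) * (β (k + 1) * β (k + 2))) * (α k - β k) := by
      rw [s (k + 1), s k]; ring
    have f1 : 2 ≤ α (k + 1) * α (k + 2) := by
      rw [hα (k + 1)]; nlinarith [hb (k + 1), hα1 (k + 2)]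
    have f2 : 2 ≤ β (k + 1) * β (k + 2) := by
      rw [hβ (k + 1)]; nlinarith [hb (k + 1), hβ1 (k + 2)]
    have f3 : 4 ≤ (α (k + 1) * α (k + 2)) * (β (k + 1) * β (k + 2)) := by nlinarith
    rw [e, abs_mul, abs_of_nonneg (by linarith : 0 ≤ (α (k + 1) * α (k + 2)) * (β (k + 1) * β (k + 2)))]
    exact mul_le_mul_of_nonneg_right f3 (abs_nonneg _)
  have pw : ∀ n : ℕ, 4 ^ n * |α 0 - β 0| ≤ |α (2 * n) - β (2 * n)| := by
    intro n
    induction n with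
    | zero => simp
    | succ n ih =>
      have := step (2 * n)
      rw [show 2 * (n + 1) = 2 * n + 2 by ring, pow_succ]
      linarith
  by_contra hne
  have hpos : 0 < |α 0 - β 0| := abs_pos.mpr (sub_ne_zero.mpr hne)
  obtain ⟨n, hn⟩ := pow_unbounded_of_one_lt (1 / |α 0 - β 0|) (by norm_num : (1 : ℝ) < 4)
  rw [div_lt_iff₀ hpos] at hn
  linarith [pw n, hd (2 * n)]

theorem cf_aux (x : ℝ) (hpos : ∀ k, 0 < cfA x k) (k : ℕ) :
    1 ≤ cfAlpha x k ∧ cfAlpha x k * cfAlpha x (k + 1) = cfA x k * cfAlpha x (k + 1) + 1 := by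
  have h1 : ∀ k, 1 ≤ cfAlpha x k := by
    intro k
    have h := hpos k
    have h2 : (cfA x k : ℝ) ≤ cfAlpha x k := Int.floor_le _
    have h3 : (1 : ℝ) ≤ cfA x k := by exact_mod_cast h
    linarith
  refine ⟨h1 k, ?_⟩
  have h2 := h1 (k + 1)
  have e : cfAlpha x (k + 1) = 1 / (cfAlpha x k - (cfA x k : ℝ)) := rfl
  have hne : cfAlpha x k - (cfA x k : ℝ) ≠ 0 := by
    intro h0
    rw [e, h0] at h2
    norm_num at h2
  have : (cfAlpha x k - (cfA x k : ℝ)) * cfAlpha x (k + 1) = 1 := by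
    rw [e]; field_simp
  linarith

theorem stmt_12 (L : ℕ) (hL : 2 ≤ L) (a : ℤ) (ha : 3 ≤ a) (c : ℕ → ℤ)
    (hc : ∀ i : ℕ, 1 ≤ i → i ≤ L - 1 → 0 < c i)
    (x : ℝ) (hx : 1 < x) (hx0 : cfA x 0 = a)
    -- the partial quotients of x are periodic with the (not necessarily minimal)
    -- period (a₁, …, a_{L−1}, a, a_{L−1}, …, a₁, 2a) of length 2L
    (hper : ∀ k : ℕ, 1 ≤ k → cfA x k =
      (fun j : ℕ => if j < L then c j else if j = L then a
        else if j < 2 * L then c (2 * L - j) else 2 * a) ((k - 1) % (2 * L) + 1))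
    (hint : ∃ n : ℤ, x ^ 2 = (n : ℝ)) :
    contq (fun i => c (i + 1)) (L - 1) = 2 * contq c (L - 1) := by
  obtain ⟨n, hn⟩ := hint
  have hpos : ∀ k, 0 < cfA x k := by
    intro k
    rcases Nat.eq_zero_or_pos k with rfl | hk
    · omega
    · rw [hper k hk]
      have hlt : (k - 1) % (2 * L) < 2 * L := Nat.mod_lt _ (by omega)
      generalize (k - 1) % (2 * L) = j at hlt
      dsimp only
      split_ifs with h1 h2 h3
      · exact hc _ (by omega) (by omega)
      · omega
      · exact hc _ (by omega) (by omega)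
      · omega
  have hA := cf_aux x hpos
  have hperiodic : ∀ k, cfA x (k + 1 + 2 * L) = cfA x (k + 1) := by
    intro k
    rw [hper (k + 1) (by omega), hper (k + 1 + 2 * L) (by omega)]
    rw [show k + 1 + 2 * L - 1 = (k + 1 - 1) + 2 * L by omega, Nat.add_mod_right]
  -- periodicity of complete quotients
  have hα : cfAlpha x (2 * L + 1) = cfAlpha x 1 := by
    have := cf_unique_s12 (fun k => cfAlpha x (k + 1 + 2 * L)) (fun k => cfAlpha x (k + 1))
      (fun k => (cfA x (k + 1) : ℝ)) (fun k => by exact_mod_cast hpos (k + 1))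
      (fun k => by
        have := (hA (k + 1 + 2 * L)).2
        rw [hperiodic] at this
        rw [show k + 1 + 1 + 2 * L = k + 1 + 2 * L + 1 by ring]
        exact this)
      (fun k => (hA (k + 1)).2) (fun k => (hA _).1) (fun k => (hA _).1)
      (fun k => by
        exact (Int.abs_sub_lt_one_of_floor_eq_floor (hperiodic k)).le)
    simpa [add_comm] using this
  -- digits
  have dig : ∀ j, 1 ≤ j → j ≤ 2 * L → cfA x j = if j < L then c j else if j = L then a
        else if j < 2 * L then c (2 * L - j) else 2 * a := by
    intro j h1 h2
    rw [hper j h1, Nat.mod_eq_of_lt (by omega), Nat.sub_add_cancel h1]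
  have h0 := (hA 0).2
  rw [hx0] at h0
  have hx' : cfAlpha x 0 = x := rfl
  rw [hx'] at h0
  have hy : cfAlpha x (2 * L) = x + a := by
    have h := (hA (2 * L)).2
    rw [dig (2 * L) (by omega) le_rfl, if_neg (by omega), if_neg (by omega), if_neg (by omega),
      hα] at h
    have h1 := (hA 1).1
    have : (cfAlpha x (2 * L) - (x + a)) * cfAlpha x 1 = 0 := by
      push_cast at h
      simp only [zero_add] at h0
      linarith
    rcases mul_eq_zero.mp this with h | h <;> linarith
  have hf : ∀ n, n + 1 ≤ L → cfAlpha x 1 * (contR c (n + 1) * cfAlpha x (n + 1) + contR c n) =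
      contq c (n + 1) * cfAlpha x (n + 1) + contq c n := by
    intro n
    induction n with
    | zero => intro _; simp [contR, contq]
    | succ k ih =>
      intro hk
      have ih := ih (by omega)
      have h := (hA (k + 1)).2
      rw [dig (k + 1) (by omega) (by omega), if_pos (by omega)] at h
      rw [contR, contq]
      push_cast
      linear_combination cfAlpha x (k + 1 + 1) * ih +
        (contq c (k + 1) - cfAlpha x 1 * contR c (k + 1)) * h
  have hb : ∀ j, j ≤ L - 1 → cfAlpha x (2 * L - j) * (contq c j * (x + a) + contR c j) =
      contq c (j + 1) * (x + a) + contR c (j + 1) := by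
    intro j
    induction j with
    | zero => intro _; simp [contR, contq, hy]
    | succ k ih =>
      intro hk
      have ih := ih (by omega)
      have h := (hA (2 * L - (k + 1))).2
      rw [dig (2 * L - (k + 1)) (by omega) (by omega), if_neg (by omega), if_neg (by omega),
        if_pos (by omega), show 2 * L - (k + 1) + 1 = 2 * L - k by omega,
        show 2 * L - (2 * L - (k + 1)) = k + 1 by omega] at h
      rw [contR, contq]
      push_cast
      linear_combination (contq c k * (x + a) + contR c k) * h +
        (c (k + 1) - cfAlpha x (2 * L - (k + 1))) * ih
  obtain ⟨l, rfl⟩ : ∃ l, L = l + 2 := ⟨L - 2, by omega⟩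
  have F := hf (l + 1) le_rfl
  have G := hb (l + 1) (by omega)
  have H := (hA (l + 2)).2
  rw [dig (l + 2) (by omega) (by omega), if_neg (by omega), if_pos rfl] at H
  rw [show 2 * (l + 2) - (l + 1) = l + 2 + 1 by omega] at G
  obtain ⟨b1, b2, b3, b4, b5, b6, b7, b8⟩ := cont_bounds c (l + 1) (fun i h1 h2 => hc i h1 (by omega))
    (l + 1) le_rfl
  have hdet := cont_det c (l + 1)
  have hq := (contR_eq c l).2
  change contq (fun i => c (i + 1)) (l + 1) = 2 * contq c (l + 1)
  rw [← hq]
  simp only [show l + 1 + 1 = l + 2 from rfl, zero_add] at *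
  generalize contq c (l + 2) = K at *
  generalize contq c (l + 1) = B at *
  generalize contR c (l + 2) = C at *
  generalize contR c (l + 1) = D at *
  refine final_int K B C D a (n - a ^ 2) ha b3 b1 b4 b5 b6 hdet ?_
  have hx1 := (hA 1).1
  generalize cfAlpha x 1 = α at *
  generalize cfAlpha x (l + 2) = u at *
  generalize cfAlpha x (l + 2 + 1) = z at *
  -- F : α (C u + D) = K u + B ; H : u z = a z + 1 ; G : z (B y + D) = K y + C
  have F1 : α * (C * (a * z + 1) + D * z) = K * (a * z + 1) + B * z := by
    linear_combination z * F + (K - α * C) * H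
  have F2 : C * (a * z + 1) + D * z = (x - a) * (K * (a * z + 1) + B * z) := by
    linear_combination (x - a) * F1 - (C * (a * z + 1) + D * z) * h0
  have F3 : C * (a * (K * (x + a) + C) + (B * (x + a) + D)) + D * (K * (x + a) + C) =
      (x - a) * (K * (a * (K * (x + a) + C) + (B * (x + a) + D)) + B * (K * (x + a) + C)) := by
    linear_combination (B * (x + a) + D) * F2 +
      ((x - a) * (K * a + B) - (C * a + D)) * G
  have : ((K * (a * K + 2 * B) * (n - a ^ 2) : ℤ) : ℝ) =
      ((2 * a * (a * K * C + B * C + K * D) + a * C ^ 2 + 2 * C * D : ℤ) : ℝ) := by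
    push_cast
    rw [← hn]
    linear_combination -F3
  exact_mod_cast this
end

section
/- Let m be a positive integer and let a₁, …, a_{2m−1} be positive integers. If q_{2m−2}(a₂, …, a_{2m−1}) = 2·q_{2m−2}(a₁, …, a_{2m−2}), then a_j = 1 for some j ∈ {1, …, 2m−1}. -/
/-- `[x (n+1); x n, …, x 1]` as a rational number. -/
def rcf (x : ℕ → ℤ) : ℕ → ℚ
  | 0 => x 1
  | n + 1 => x (n + 2) + 1 / rcf x n

theorem contq_left (x : ℕ → ℤ) (n : ℕ) :
    contq x (n + 2) = x 1 * contq (fun i => x (i + 1)) (n + 1)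
      + contq (fun i => x (i + 2)) n := by
  induction n using Nat.strong_induction_on with
  | _ n ih =>
    match n with
    | 0 => simp [contq]
    | 1 => simp [contq]; ring
    | n + 2 =>
      have h1 := ih n (by omega)
      have h2 := ih (n + 1) (by omega)
      have e1 : contq x (n + 2 + 2) = x (n + 3) * contq x (n + 1 + 2) + contq x (n + 2) := rfl
      have e2 : contq (fun i => x (i + 1)) (n + 2 + 1)
        = x (n + 3) * contq (fun i => x (i + 1)) (n + 1 + 1)
          + contq (fun i => x (i + 1)) (n + 1) := rfl
      have e3 : contq (fun i => x (i + 2)) (n + 2)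
        = x (n + 3) * contq (fun i => x (i + 2)) (n + 1)
          + contq (fun i => x (i + 2)) n := rfl
      rw [e1, e2, e3, h1, h2]; ring

theorem contq_rev (x : ℕ → ℤ) (n : ℕ) : ∀ b : ℕ → ℤ,
    (∀ i, 1 ≤ i → i ≤ n → b i = x (n + 1 - i)) → contq b (n + 1) = contq x (n + 1) := by
  induction n using Nat.strong_induction_on with
  | _ n ih =>
    intro b hb
    match n with
    | 0 => simp [contq]
    | 1 => simp [contq, hb 1]
    | n + 2 =>
      have h1 := ih (n + 1) (by omega) (fun i => b (i + 1)) (by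
        intro i h1 h2
        show b (i + 1) = _
        rw [hb (i + 1) (by omega) (by omega)]; congr 1; omega)
      have h2 := ih n (by omega) (fun i => b (i + 2)) (by
        intro i h1 h2
        show b (i + 2) = _
        rw [hb (i + 2) (by omega) (by omega)]; congr 1; omega)
      have h3 : contq x (n + 2 + 1) = x (n + 2) * contq x (n + 1 + 1) + contq x (n + 1) := rfl
      rw [show n + 2 + 1 = (n + 1) + 2 from rfl, contq_left, h1, h2,
        hb 1 (by omega) (by omega)]
      exact h3.symm

theorem rcf_ge (x : ℕ → ℤ) (n : ℕ) (hx : ∀ i, 1 ≤ i → i ≤ n + 1 → 2 ≤ x i) : 2 ≤ rcf x n := by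
  induction n with
  | zero => simp only [rcf]; exact_mod_cast hx 1 (by omega) (by omega)
  | succ n ih =>
    have h := ih (fun i h1 h2 => hx i h1 (by omega))
    have h2 : (2 : ℚ) ≤ x (n + 2) := by exact_mod_cast hx (n + 2) (by omega) (by omega)
    have : 0 < 1 / rcf x n := by positivity
    simp only [rcf]; linarith

theorem contq_rcf (x : ℕ → ℤ) (n : ℕ) (hx : ∀ i, 1 ≤ i → i ≤ n + 1 → 2 ≤ x i) :
    0 < contq x (n + 1) ∧ (contq x (n + 2) : ℚ) = rcf x n * contq x (n + 1) := by
  induction n with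
  | zero => simp [contq, rcf]
  | succ n ih =>
    obtain ⟨h0, h⟩ := ih (fun i h1 h2 => hx i h1 (by omega))
    have hg := rcf_ge x n (fun i h1 h2 => hx i h1 (by omega))
    have h0' : (0 : ℚ) < contq x (n + 1) := by exact_mod_cast h0
    have hp : (0 : ℚ) < contq x (n + 2) := by rw [h]; positivity
    refine ⟨by exact_mod_cast hp, ?_⟩
    have e : contq x (n + 1 + 2) = x (n + 2) * contq x (n + 2) + contq x (n + 1) := rfl
    rw [e, show n + 1 + 1 = n + 2 from rfl]
    push_cast
    rw [h]
    simp only [rcf]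
    field_simp

theorem rcf_step (p q : ℤ) (u v : ℚ) (hu : 2 ≤ u) (hv : 2 ≤ v)
    (h : p + 1 / u = 2 * (q + 1 / v)) : p = 2 * q ∧ v = 2 * u := by
  have hu0 : 0 < 1 / u := by positivity
  have hv0 : 0 < 1 / v := by positivity
  have hu1 : 1 / u ≤ 1 / 2 := one_div_le_one_div_of_le (by norm_num) hu
  have hv1 : 1 / v ≤ 1 / 2 := one_div_le_one_div_of_le (by norm_num) hv
  have h1 : ((p - 2 * q : ℤ) : ℚ) < (1 : ℤ) := by push_cast; linarith
  have h2 : ((-1 : ℤ) : ℚ) < (p - 2 * q : ℤ) := by push_cast; linarith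
  have h1' := Int.cast_lt.mp h1
  have h2' := Int.cast_lt.mp h2
  have hpq : p = 2 * q := by omega
  refine ⟨hpq, ?_⟩
  subst hpq
  push_cast at h
  have h3 : 1 / u = 2 * (1 / v) := by linarith
  field_simp at h3
  linarith

theorem rcf_main (x y : ℕ → ℤ) (k : ℕ) (hx : ∀ i, 1 ≤ i → i ≤ 2 * k + 1 → 2 ≤ x i)
    (hy : ∀ i, 1 ≤ i → i ≤ 2 * k + 1 → 2 ≤ y i) (h : rcf x (2 * k) = 2 * rcf y (2 * k)) :
    x (2 * k + 1) = 2 * y (2 * k + 1) ∧ x 1 = 2 * y 1 := by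
  induction k with
  | zero =>
    simp only [rcf, Nat.mul_zero] at h
    have : x 1 = 2 * y 1 := by exact_mod_cast h
    exact ⟨this, this⟩
  | succ k ih =>
    have hu := rcf_ge x (2 * k + 1) (fun i h1 h2 => hx i h1 (by omega))
    have hv := rcf_ge y (2 * k + 1) (fun i h1 h2 => hy i h1 (by omega))
    have hX := rcf_ge x (2 * k) (fun i h1 h2 => hx i h1 (by omega))
    have hY := rcf_ge y (2 * k) (fun i h1 h2 => hy i h1 (by omega))
    obtain ⟨e1, e2⟩ := rcf_step (x (2 * k + 3)) (y (2 * k + 3)) _ _ hu hv h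
    obtain ⟨e3, e4⟩ := rcf_step (y (2 * k + 2)) (x (2 * k + 2)) _ _ hY hX e2
    exact ⟨e1, (ih (fun i h1 h2 => hx i h1 (by omega)) (fun i h1 h2 => hy i h1 (by omega)) e4).2⟩

theorem stmt_13 (m : ℕ) (hm : 0 < m) (a : ℕ → ℤ)
    (ha : ∀ i : ℕ, 1 ≤ i → i ≤ 2 * m - 1 → 0 < a i)
    (h : contq (fun i => a (i + 1)) (2 * m - 1) = 2 * contq a (2 * m - 1)) :
    ∃ j : ℕ, 1 ≤ j ∧ j ≤ 2 * m - 1 ∧ a j = 1 := by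
  by_contra hne
  obtain ⟨k, rfl⟩ : ∃ k, m = k + 1 := ⟨m - 1, by omega⟩
  have e : 2 * (k + 1) - 1 = 2 * k + 1 := by omega
  rw [e] at ha h hne
  have hx : ∀ i, 1 ≤ i → i ≤ 2 * k + 1 → 2 ≤ a i := by
    intro i h1 h2
    have h3 := ha i h1 h2
    have h4 : a i ≠ 1 := fun h5 => hne ⟨i, h1, h2, h5⟩
    omega
  set b : ℕ → ℤ := fun i => a (2 * k + 2 - i) with hb
  have hy : ∀ i, 1 ≤ i → i ≤ 2 * k + 1 → 2 ≤ b i :=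
    fun i h1 h2 => hx _ (by omega) (by omega)
  have r1 : contq b (2 * k + 2) = contq a (2 * k + 2) :=
    contq_rev a (2 * k + 1) b (fun i _ _ => rfl)
  have r2 : contq b (2 * k + 1) = contq (fun i => a (i + 1)) (2 * k + 1) :=
    contq_rev (fun i => a (i + 1)) (2 * k) b (fun i h1 h2 => by
      show a _ = a _
      congr 1; omega)
  obtain ⟨pa, ea⟩ := contq_rcf a (2 * k) hx
  obtain ⟨pb, eb⟩ := contq_rcf b (2 * k) hy
  rw [r1, r2, h, ea] at eb
  have pa' : (0 : ℚ) < contq a (2 * k + 1) := by exact_mod_cast pa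
  push_cast at eb
  have key : rcf a (2 * k) = 2 * rcf b (2 * k) := by
    apply mul_right_cancel₀ pa'.ne'
    linarith
  obtain ⟨f1, f2⟩ := rcf_main a b k hx hy key
  have g1 : b (2 * k + 1) = a 1 := by simp only [hb]; congr 1; omega
  have g2 : b 1 = a (2 * k + 1) := rfl
  have := hx 1 (by omega) (by omega)
  omega
end

section
/- There exists a constant C > 0 such that for every squarefree integer D > 1, the period length T_D of the continued fraction expansion of √D satisfies T_D ≤ C·√D·log D. -/
lemma aux_sum_div (N : ℕ) :
    ((∑ n ∈ Finset.Ioc 0 N, n.divisors.card : ℕ) : ℝ) ≤ N * (1 + Real.log N) := by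
  have h := ArithmeticFunction.sum_Ioc_sigma0_eq_sum_div N
  simp only [ArithmeticFunction.sigma_zero_apply] at h
  rw [h]
  have h2 := harmonic_le_one_add_log N
  rw [harmonic_eq_sum_Icc] at h2
  push_cast at h2 ⊢
  calc _ ≤ ∑ n ∈ Finset.Ioc 0 N, (N : ℝ) * ((n : ℝ))⁻¹ := by
        apply Finset.sum_le_sum
        intro n _
        rw [← div_eq_mul_inv]
        exact Nat.cast_div_le
    _ = N * ∑ n ∈ Finset.Icc 1 N, ((n : ℝ))⁻¹ := by
        rw [Finset.mul_sum]; rfl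
    _ ≤ _ := by gcongr

/-- Reduced pairs: `(P + √D)/Q` is a reduced quadratic irrational. -/
def CfRed (D : ℕ) (p : ℤ × ℤ) : Prop :=
  0 < p.2 ∧ p.2 ∣ D - p.1 ^ 2 ∧ (p.2 : ℝ) < p.1 + √D ∧ (p.1 : ℝ) < √D ∧ √D - p.1 < p.2

/-- value of a pair -/
noncomputable def cfVal (D : ℕ) (p : ℤ × ℤ) : ℝ := (p.1 + √D) / p.2

/-- one step on pairs -/
noncomputable def cfStep (D : ℕ) (p : ℤ × ℤ) : ℤ × ℤ :=
  (⌊cfVal D p⌋ * p.2 - p.1, (D - (⌊cfVal D p⌋ * p.2 - p.1) ^ 2) / p.2)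

lemma cfStep_props (D : ℕ) (hD : Irrational (√(D : ℝ))) (p : ℤ × ℤ) (hp : CfRed D p) :
    CfRed D (cfStep D p) ∧ cfVal D (cfStep D p) = 1 / (cfVal D p - ⌊cfVal D p⌋) ∧
    p.2 * (cfStep D p).2 = D - (cfStep D p).1 ^ 2 ∧
    p.1 = ⌊((cfStep D p).1 + √D) / p.2⌋ * p.2 - (cfStep D p).1 := by
  obtain ⟨P, Q⟩ := p
  obtain ⟨hQ, hdvd, h1, h2, h3⟩ := hp
  simp only at hQ hdvd h1 h2 h3
  obtain ⟨a, ha⟩ : ∃ a : ℤ, a = ⌊cfVal D (P, Q)⌋ := ⟨_, rfl⟩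
  obtain ⟨P', hP'⟩ : ∃ P' : ℤ, P' = a * Q - P := ⟨_, rfl⟩
  have hdvd' : Q ∣ D - P' ^ 2 := by
    have : (D : ℤ) - P' ^ 2 = (D - P ^ 2) + Q * (2 * a * P - a ^ 2 * Q) := by rw [hP']; ring
    rw [this]
    exact dvd_add hdvd (dvd_mul_right _ _)
  obtain ⟨Q', hQ'⟩ := hdvd'
  have hstep : cfStep D (P, Q) = (P', Q') := by
    simp only [cfStep, ← ha, ← hP']
    rw [hQ', Int.mul_ediv_cancel_left _ hQ.ne']
  have hQr : (0 : ℝ) < Q := by exact_mod_cast hQ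
  have hs : √(D : ℝ) ^ 2 = D := Real.sq_sqrt (Nat.cast_nonneg D)
  have hQ'r : (D : ℝ) - P' ^ 2 = Q * Q' := by exact_mod_cast hQ'
  have hP'r : (P' : ℝ) = a * Q - P := by exact_mod_cast hP'
  have hv1 : (a : ℝ) ≤ (P + √D) / Q := by rw [ha]; exact Int.floor_le _
  have hv2 : (P + √D) / Q < (a : ℝ) + 1 := by rw [ha]; exact Int.lt_floor_add_one _
  rw [le_div_iff₀ hQr] at hv1
  rw [div_lt_iff₀ hQr] at hv2
  have ha1 : (1 : ℤ) ≤ a := by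
    rw [ha, Int.le_floor, cfVal, le_div_iff₀ hQr]; push_cast; linarith
  have ha1r : (1 : ℝ) ≤ a := by exact_mod_cast ha1
  have hlt : (P' : ℝ) < √D := by
    refine lt_of_le_of_ne (by linarith) ?_
    intro h; exact hD.ne_int P' h.symm
  have hlt2 : √D - P' < Q := by linarith
  have hpos : Q < √D + P' := by nlinarith
  have hprod : (√D - P') * (√D + P') = Q * Q' := by linear_combination hs + hQ'r
  have hQ'pos : (0 : ℝ) < Q' := by
    have : 0 < (√D - P') * (√D + P') := mul_pos (by linarith) (by linarith)
    rw [hprod] at this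
    exact (mul_pos_iff_of_pos_left hQr).1 this
  rw [hstep]
  refine ⟨⟨by exact_mod_cast hQ'pos, ⟨Q, by rw [hQ']; ring⟩, ?_, hlt, ?_⟩, ?_, hQ'.symm, ?_⟩
  · show (Q' : ℝ) < P' + √D
    nlinarith
  · show √D - P' < (Q' : ℝ)
    nlinarith
  · rw [← ha]
    simp only [cfVal]
    have e : (P + √D) / Q - (a : ℝ) = (√D - P') / Q := by
      rw [hP'r]; field_simp; ring
    rw [e, one_div_div, div_eq_div_iff hQ'pos.ne' (by linarith)]
    linarith
  · simp only
    have : ⌊((P' : ℝ) + √D) / Q⌋ = a := by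
      rw [Int.floor_eq_iff, le_div_iff₀ hQr, div_lt_iff₀ hQr]
      constructor <;> linarith
    rw [this, hP']; ring

lemma cfStep_inj (D : ℕ) (hD : Irrational (√(D : ℝ))) (p q : ℤ × ℤ) (hp : CfRed D p)
    (hq : CfRed D q) (h : cfStep D p = cfStep D q) : p = q := by
  obtain ⟨a1, _, a3, a4⟩ := cfStep_props D hD p hp
  obtain ⟨_, _, b3, b4⟩ := cfStep_props D hD q hq
  rw [← h] at b3 b4
  have e2 : p.2 = q.2 := mul_right_cancel₀ a1.1.ne' (a3.trans b3.symm)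
  rw [e2, ← b4] at a4
  exact Prod.ext a4 e2

lemma cf_main (D : ℕ) (hD : Irrational (√(D : ℝ))) (N : ℕ) (F : Finset (ℤ × ℤ))
    (hF : ∀ p, CfRed D p → p ∈ F) (hN : F.card ≤ N) : cfPeriod (√D) ≤ N := by
  have hs : √(D : ℝ) ^ 2 = D := Real.sq_sqrt (Nat.cast_nonneg D)
  have hlt : (⌊√(D : ℝ)⌋ : ℝ) < √D :=
    lt_of_le_of_ne (Int.floor_le _) (fun h => hD.ne_int _ h.symm)
  have hlt2 := Int.lt_floor_add_one (√(D : ℝ))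
  have h0 : 1 ≤ √(D : ℝ) := by
    rcases Nat.eq_zero_or_pos D with rfl | h
    · simp at hD
    · rw [Real.one_le_sqrt]; exact_mod_cast h
  have h0' : (1 : ℝ) ≤ ⌊√(D : ℝ)⌋ := by exact_mod_cast Int.le_floor.2 (by simpa using h0)
  obtain ⟨r, hr⟩ : ∃ r : ℤ, r = ⌊√(D : ℝ)⌋ := ⟨_, rfl⟩
  rw [← hr] at hlt hlt2 h0'
  have hp0 : CfRed D (r, D - r ^ 2) := by
    refine ⟨?_, dvd_rfl, ?_, hlt, ?_⟩
    · have : (0 : ℝ) < D - r ^ 2 := by nlinarith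
      exact_mod_cast this
    · push_cast; nlinarith
    · push_cast; nlinarith
  let f : {p // CfRed D p} → {p // CfRed D p} :=
    fun p => ⟨cfStep D p.1, (cfStep_props D hD p.1 p.2).1⟩
  have hf : Function.Injective f := by
    intro p q h
    exact Subtype.ext (cfStep_inj D hD _ _ p.2 q.2 (congrArg Subtype.val h))
  let p0 : {p // CfRed D p} := ⟨_, hp0⟩
  have hval : ∀ k, cfAlpha (√D) (k + 1) = cfVal D (f^[k] p0).1 := by
    intro k
    induction k with
    | zero =>
      simp only [cfAlpha, Function.iterate_zero, id, p0, cfVal, ← hr]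
      push_cast
      have : (0 : ℝ) < D - r ^ 2 := by nlinarith
      rw [div_eq_div_iff (by linarith) this.ne']
      nlinarith
    | succ k ih =>
      rw [cfAlpha, ih, Function.iterate_succ_apply']
      exact (cfStep_props D hD _ (f^[k] p0).2).2.1.symm
  obtain ⟨i, hi, j, hj, hne, heq⟩ := Finset.exists_ne_map_eq_of_card_lt_of_maps_to
    (s := Finset.range (N + 1)) (t := F) (by simpa using Nat.lt_succ_of_le hN)
    (f := fun k => (f^[k] p0).1) (fun k _ => hF _ (f^[k] p0).2)
  have heq' : f^[i] p0 = f^[j] p0 := Subtype.ext heq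
  simp only [Finset.mem_range] at hi hj
  have main : ∀ l, 0 < l → l ≤ N → f^[l] p0 = p0 → cfPeriod (√D) ≤ N := by
    intro l hl hlN hfl
    refine le_trans (Nat.sInf_le ⟨hl, ?_⟩) hlN
    intro k hk
    obtain ⟨m, rfl⟩ := Nat.exists_eq_add_of_le' hk
    rw [cfA, cfA, show m + 1 + l = (m + l) + 1 by ring, hval, hval, Function.iterate_add_apply, hfl]
  rcases lt_or_gt_of_ne hne with h | h
  · exact main (j - i) (by omega) (by omega) (Function.iterate_cancel hf heq'.symm)
  · exact main (i - j) (by omega) (by omega) (Function.iterate_cancel hf heq')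


/-- two solutions with same gcd differ by multiple of Q/2 -/
lemma aux_two_dvd (D : ℕ) (hD : Squarefree D) (Q x0 x y : ℤ) (hQ : 0 < Q)
    (h0 : Q ∣ D - x0 ^ 2) (hx : Q ∣ D - x ^ 2) (hy : Q ∣ D - y ^ 2)
    (hg : Int.gcd (x - x0) Q = Int.gcd (y - x0) Q) : Q ∣ 2 * (x - y) := by
  obtain ⟨d, hd⟩ : ∃ d : ℤ, d = Int.gcd (x - x0) Q := ⟨_, rfl⟩
  have hdpos : 0 < d := by
    rw [hd]; exact_mod_cast Int.gcd_pos_of_ne_zero_right _ hQ.ne'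
  have hdx : d ∣ x - x0 := hd ▸ Int.gcd_dvd_left ..
  have hdQ : d ∣ Q := hd ▸ Int.gcd_dvd_right ..
  have hdy : d ∣ y - x0 := by rw [hd, hg]; exact Int.gcd_dvd_left ..
  obtain ⟨e, he⟩ := hdQ
  have key : ∀ z : ℤ, Q ∣ D - z ^ 2 → d = Int.gcd (z - x0) Q → e ∣ z + x0 := by
    intro z hz hdz
    have h1 : Q ∣ (z - x0) * (z + x0) := by
      have := dvd_sub h0 hz
      obtain ⟨k, hk⟩ := this; exact ⟨k, by linear_combination hk⟩
    have h2 : Q ∣ d * (z + x0) := by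
      rw [hdz, Int.gcd_eq_gcd_ab, add_mul]
      refine dvd_add ?_ ?_
      · have := h1.mul_right (Int.gcdA (z - x0) Q)
        obtain ⟨k, hk⟩ := this; exact ⟨k, by linear_combination hk⟩
      · exact ⟨Int.gcdB (z - x0) Q * (z + x0), by ring⟩
    rw [he] at h2
    exact (mul_dvd_mul_iff_left hdpos.ne').1 h2
  have hex := key x hx hd
  have hey := key y hy (by rw [hd, hg])
  have hdxy : d ∣ x - y := by have := dvd_sub hdx hdy; obtain ⟨k, hk⟩ := this; exact ⟨k, by linear_combination hk⟩
  have hexy : e ∣ x - y := by have := dvd_sub hex hey; obtain ⟨k, hk⟩ := this; exact ⟨k, by linear_combination hk⟩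
  -- the gcd of d and e
  obtain ⟨g, hgdef⟩ : ∃ g : ℕ, g = Int.gcd d e := ⟨_, rfl⟩
  have hgd : (g : ℤ) ∣ d := hgdef ▸ Int.gcd_dvd_left ..
  have hge : (g : ℤ) ∣ e := hgdef ▸ Int.gcd_dvd_right ..
  have hg2x : (g : ℤ) ∣ 2 * x0 := by
    have := dvd_sub (hge.trans hex) (hgd.trans hdx)
    obtain ⟨k, hk⟩ := this; exact ⟨k, by linear_combination hk⟩
  have hgQ : (g : ℤ) ^ 2 ∣ Q := by rw [he, sq]; exact mul_dvd_mul hgd hge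
  have hg4 : (g : ℤ) ^ 2 ∣ 4 * D := by
    have h1 : (g : ℤ) ^ 2 ∣ (2 * x0) ^ 2 := pow_dvd_pow_of_dvd hg2x 2
    have h2 : (g : ℤ) ^ 2 ∣ 4 * (D - x0 ^ 2) := (hgQ.trans h0).mul_left 4
    have := dvd_add h1 h2
    obtain ⟨k, hk⟩ := this; exact ⟨k, by linear_combination hk⟩
  have hg4' : g * g ∣ 4 * D := by
    rw [sq] at hg4; exact_mod_cast hg4
  have hg2 : g ∣ 2 := by
    rcases Nat.even_or_odd' g with ⟨h, rfl | rfl⟩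
    · have : h * h ∣ D := by
        have h3 : 4 * (h * h) ∣ 4 * D := by rw [show 4 * (h * h) = 2 * h * (2 * h) by ring]; exact hg4'
        exact (mul_dvd_mul_iff_left (by norm_num)).1 h3
      have := Nat.isUnit_iff.1 (hD h this)
      simp [this]
    · have hc : Nat.Coprime ((2*h+1)*(2*h+1)) 4 := by
        have : Nat.Coprime (2*h+1) 2 := by simp
        have h4 : Nat.Coprime (2*h+1) 4 := by
          have := this.pow_right 2
          simpa using this
        exact h4.mul_left h4
      have := Nat.isUnit_iff.1 (hD _ (hc.dvd_of_dvd_mul_left hg4'))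
      rw [this]; norm_num
  have h5 : d * e ∣ (Int.gcd d e : ℤ) * (x - y) := by
    rw [Int.gcd_eq_gcd_ab, add_mul]
    refine dvd_add ?_ ?_
    · have := mul_dvd_mul_left d (hexy.mul_left (Int.gcdA d e))
      obtain ⟨k, hk⟩ := this; exact ⟨k, by linear_combination hk⟩
    · have := mul_dvd_mul_right (hdxy.mul_left (Int.gcdB d e)) e
      obtain ⟨k, hk⟩ := this; exact ⟨k, by linear_combination hk⟩
  rw [← hgdef, ← he] at h5
  obtain ⟨c, hc⟩ := hg2
  have hc' : (2 : ℤ) = g * c := by exact_mod_cast hc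
  rw [hc']
  have := h5.mul_left (c : ℤ)
  obtain ⟨k, hk⟩ := this; exact ⟨k, by linear_combination hk⟩

lemma aux_count (D : ℕ) (hD : Squarefree D) (Q : ℕ) (hQ : 0 < Q) (r : ℤ) :
    ((Finset.Ioc (r - Q) r).filter (fun P : ℤ => (Q : ℤ) ∣ D - P ^ 2)).card
      ≤ 2 * Q.divisors.card := by
  classical
  set S := (Finset.Ioc (r - Q) r).filter (fun P : ℤ => (Q : ℤ) ∣ D - P ^ 2) with hS
  rcases S.eq_empty_or_nonempty with h | ⟨x0, hx0⟩
  · simp [h]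
  have hx0' := (Finset.mem_filter.1 hx0).2
  have hQ' : (0 : ℤ) < Q := by exact_mod_cast hQ
  have h1 : S.card ≤ 2 * (S.image (fun P : ℤ => Int.gcd (P - x0) Q)).card := by
    apply Finset.card_le_mul_card_image
    intro b _
    by_contra! hlt
    obtain ⟨u, hu, v, hv, w, hw, huv, huw, hvw⟩ := Finset.two_lt_card.1 hlt
    simp only [hS, Finset.mem_filter, Finset.mem_Ioc] at hu hv hw
    obtain ⟨c1, e1⟩ := aux_two_dvd D hD Q x0 u v hQ' hx0' hu.1.2 hv.1.2 (hu.2.trans hv.2.symm)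
    obtain ⟨c2, e2⟩ := aux_two_dvd D hD Q x0 u w hQ' hx0' hu.1.2 hw.1.2 (hu.2.trans hw.2.symm)
    have b1 : c1 < 2 := by nlinarith
    have b2 : -2 < c1 := by nlinarith
    have b3 : c2 < 2 := by nlinarith
    have b4 : -2 < c2 := by nlinarith
    interval_cases c1 <;> interval_cases c2 <;> omega
  refine h1.trans (Nat.mul_le_mul_left 2 (Finset.card_le_card ?_))
  intro d hd
  obtain ⟨P, _, rfl⟩ := Finset.mem_image.1 hd
  rw [Nat.mem_divisors]
  refine ⟨?_, hQ.ne'⟩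
  exact_mod_cast Int.gcd_dvd_right (P - x0) (Q : ℤ)

theorem stmt_17 :
    ∃ C : ℝ, 0 < C ∧ ∀ D : ℕ, Squarefree D → 1 < D →
      (cfPeriod (Real.sqrt D) : ℝ) ≤ C * Real.sqrt D * Real.log D := by
  refine ⟨20, by norm_num, ?_⟩
  intro D hsq hD1
  classical
  have hirr : Irrational (√(D : ℝ)) := by
    rw [irrational_sqrt_natCast_iff]
    rintro ⟨m, hm⟩
    have := Nat.isUnit_iff.1 (hsq m ⟨1, by rw [hm]; ring⟩)
    subst this
    omega
  set r : ℕ := Nat.sqrt D with hr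
  have hr1 : (r : ℝ) ≤ √D := Real.nat_sqrt_le_real_sqrt
  have hr2 : √(D : ℝ) < r + 1 := Real.real_sqrt_lt_nat_sqrt_succ
  have hrpos : 1 ≤ r := by rw [hr, Nat.le_sqrt]; omega
  let F : Finset (ℤ × ℤ) := (Finset.Ioc 0 (2 * r)).biUnion fun Q : ℕ =>
    ((Finset.Ioc ((r : ℤ) - Q) r).filter (fun P : ℤ => (Q : ℤ) ∣ D - P ^ 2)).image
      (fun P => (P, (Q : ℤ)))
  have hcard : F.card ≤ 2 * ∑ n ∈ Finset.Ioc 0 (2 * r), n.divisors.card := by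
    rw [Finset.mul_sum]
    refine Finset.card_biUnion_le.trans (Finset.sum_le_sum ?_)
    intro Q hQ
    exact Finset.card_image_le.trans (aux_count D hsq Q (Finset.mem_Ioc.1 hQ).1 r)
  have hF : ∀ p, CfRed D p → p ∈ F := by
    rintro ⟨P, Q⟩ ⟨h1, h2, h3, h4, h5⟩
    simp only at h1 h2 h3 h4 h5
    lift Q to ℕ using h1.le
    have hPr : P < r + 1 := by
      have : (P : ℝ) < r + 1 := h4.trans hr2
      exact_mod_cast this
    have hPr' : (P : ℝ) ≤ r := by exact_mod_cast Int.lt_add_one_iff.1 hPr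
    have hPl : (r : ℤ) - Q < P := by
      have : (r : ℝ) - Q < P := by push_cast at h5; linarith
      exact_mod_cast this
    have hQr : Q < 2 * r + 1 := by
      have : (Q : ℝ) < 2 * r + 1 := by push_cast at h3; linarith
      exact_mod_cast this
    simp only [F, Finset.mem_biUnion, Finset.mem_image, Finset.mem_filter, Finset.mem_Ioc]
    exact ⟨Q, ⟨by exact_mod_cast h1, by omega⟩, P, ⟨⟨hPl, by omega⟩, h2⟩, rfl⟩
  have hT := cf_main D hirr _ F hF hcard
  have hT' : (cfPeriod (√D) : ℝ) ≤
      2 * ((∑ n ∈ Finset.Ioc 0 (2 * r), n.divisors.card : ℕ) : ℝ) := by exact_mod_cast hT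
  have hS := aux_sum_div (2 * r)
  have hDr : (2 : ℝ) ≤ D := by exact_mod_cast hD1
  have hlog2 : (0.69 : ℝ) < Real.log 2 := by have := Real.log_two_gt_d9; linarith
  have hlog2' : Real.log 2 < 0.7 := by have := Real.log_two_lt_d9; linarith
  have hlogD : Real.log 2 ≤ Real.log D := Real.log_le_log (by norm_num) hDr
  have hrr : (1 : ℝ) ≤ r := by exact_mod_cast hrpos
  have hlogN : Real.log ((2 * r : ℕ) : ℝ) ≤ Real.log 2 + Real.log D / 2 := by
    rw [← Real.log_sqrt (by positivity), ← Real.log_mul (by norm_num) (by positivity)]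
    apply Real.log_le_log
    · push_cast; linarith
    · push_cast; linarith
  have hN : ((2 * r : ℕ) : ℝ) ≤ 2 * √D := by push_cast; linarith
  have hfin : ((2 * r : ℕ) : ℝ) * (1 + Real.log ((2 * r : ℕ) : ℝ)) ≤
      2 * √D * (5 * Real.log D) := by
    apply mul_le_mul hN _ _ (by positivity)
    · linarith
    · have : 0 ≤ Real.log ((2 * r : ℕ) : ℝ) := Real.log_natCast_nonneg _
      linarith
  linarith
end

section
/- There exists a constant C > 0 such that for every integer m ≥ 2, the period length T_{p_m} of the continued fraction expansion of √(p_m) satisfies T_{p_m} ≤ C·√m·(log m)^{3/2}, where p_m denotes the m-th prime number. -/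
namespace CFAux

/-- A square dividing `4p` with `p` an odd prime has root dividing `2`. -/
lemma dvd_two_of_sq_dvd {p g : ℕ} (hp : p.Prime) (h2 : p ≠ 2) (h : g ^ 2 ∣ 4 * p) : g ∣ 2 := by
  have hpg : ¬ p ∣ g := by
    intro hd
    have h1 : p ^ 2 ∣ 4 * p := (pow_dvd_pow_of_dvd hd 2).trans h
    have h3 : p ∣ 4 := by
      rw [sq] at h1
      exact Nat.dvd_of_mul_dvd_mul_right hp.pos h1
    have h4 : p ∣ 2 := hp.dvd_of_dvd_pow (n := 2) (by simpa using h3)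
    exact h2 ((Nat.prime_dvd_prime_iff_eq hp Nat.prime_two).1 h4)
  have hc : Nat.Coprime (g ^ 2) p := ((hp.coprime_iff_not_dvd.2 hpg).symm).pow_left 2
  have h5 : g ^ 2 ∣ 2 ^ 2 := by simpa using hc.dvd_of_dvd_mul_right h
  exact (Nat.pow_dvd_pow_iff (by norm_num)).1 h5

lemma key {p : ℕ} (hp : p.Prime) (h2 : p ≠ 2) {Q P0 P1 P2 : ℤ} (hQ : 0 < Q)
    (h0 : Q ∣ p - P0 ^ 2) (h1 : Q ∣ p - P1 ^ 2) (h3 : Q ∣ p - P2 ^ 2)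
    (hg : Int.gcd (P1 - P0) Q = Int.gcd (P2 - P0) Q) : Q ∣ 2 * (P1 - P2) := by
  set d : ℕ := Int.gcd (P1 - P0) Q with hd
  have hdpos : (d : ℤ) ≠ 0 := by
    have : 0 < d := Int.gcd_pos_of_ne_zero_right _ hQ.ne'
    exact_mod_cast this.ne'
  obtain ⟨e, he⟩ : (d : ℤ) ∣ Q := Int.gcd_dvd_right _ _
  have aux : ∀ P : ℤ, Q ∣ p - P ^ 2 → d = Int.gcd (P - P0) Q → e ∣ P + P0 := by
    intro P hP hdP
    have hb := Int.gcd_eq_gcd_ab (P - P0) Q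
    rw [← hdP] at hb
    have h4 : Q ∣ (P - P0) * (P + P0) := by
      have := dvd_sub h0 hP
      obtain ⟨w, hw⟩ := this
      exact ⟨w, by linear_combination hw⟩
    have h5 : Q ∣ d * (P + P0) := by
      rw [hb]
      have : ((P - P0) * Int.gcdA (P - P0) Q + Q * Int.gcdB (P - P0) Q) * (P + P0)
        = (P - P0) * (P + P0) * Int.gcdA (P - P0) Q + Q * (Int.gcdB (P - P0) Q * (P + P0)) := by
        ring
      rw [this]
      exact dvd_add (h4.mul_right _) (dvd_mul_right _ _)
    rw [he] at h5
    exact (mul_dvd_mul_iff_left hdpos).1 h5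
  have e1 := aux P1 h1 hd
  have e2 := aux P2 h3 hg
  have d1 : (d : ℤ) ∣ P1 - P0 := Int.gcd_dvd_left _ _
  have d2 : (d : ℤ) ∣ P2 - P0 := by rw [hg]; exact Int.gcd_dvd_left _ _
  have dz : (d : ℤ) ∣ P1 - P2 := by
    have := dvd_sub d1 d2
    obtain ⟨w, hw⟩ := this
    exact ⟨w, by linear_combination hw⟩
  have ez : e ∣ P1 - P2 := by
    have := dvd_sub e1 e2
    obtain ⟨w, hw⟩ := this
    exact ⟨w, by linear_combination hw⟩
  set g : ℕ := Int.gcd d e with hgdef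
  have gd : (g : ℤ) ∣ d := Int.gcd_dvd_left _ _
  have ge : (g : ℤ) ∣ e := Int.gcd_dvd_right _ _
  have g2 : g ∣ 2 := by
    apply dvd_two_of_sq_dvd hp h2
    have a1 : (g : ℤ) ∣ 2 * P0 := by
      have := dvd_sub (ge.trans e1) (gd.trans d1)
      obtain ⟨w, hw⟩ := this
      exact ⟨w, by linear_combination hw⟩
    have a2 : (g : ℤ) ^ 2 ∣ Q := by
      rw [he, sq]
      exact mul_dvd_mul gd ge
    have a3 : (g : ℤ) ^ 2 ∣ 4 * p := by
      have b1 : (g : ℤ) ^ 2 ∣ (2 * P0) ^ 2 := pow_dvd_pow_of_dvd a1 2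
      have b2 := (a2.trans h0).mul_left 4
      have := dvd_add b1 b2
      obtain ⟨w, hw⟩ := this
      exact ⟨w, by linear_combination hw⟩
    exact_mod_cast a3
  have hb := Int.gcd_eq_gcd_ab (d : ℤ) e
  rw [← hgdef] at hb
  obtain ⟨z1, hz1⟩ := dz
  obtain ⟨z2, hz2⟩ := ez
  have hgz : Q ∣ g * (P1 - P2) := by
    refine ⟨Int.gcdA d e * z2 + Int.gcdB d e * z1, ?_⟩
    rw [hb, he]
    calc _ = d * Int.gcdA d e * (P1 - P2) + e * Int.gcdB d e * (P1 - P2) := by ring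
      _ = d * Int.gcdA d e * (e * z2) + e * Int.gcdB d e * (d * z1) := by
        rw [← hz1, ← hz2]
      _ = _ := by ring
  obtain ⟨c, hc⟩ := g2
  have : (2 : ℤ) = g * c := by exact_mod_cast hc
  rw [this]
  have := hgz.mul_left (c : ℤ)
  obtain ⟨w, hw⟩ := this
  exact ⟨w, by linear_combination hw⟩

/-- The admissible numerators for denominator `Q`. -/
noncomputable def F (p : ℕ) (A : ℤ) (Q : ℕ) : Finset ℤ :=
  (Finset.Ioc (A - Q) A).filter (fun P => (Q : ℤ) ∣ p - P ^ 2)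

lemma card_F {p : ℕ} (hp : p.Prime) (h2 : p ≠ 2) (A : ℤ) {Q : ℕ} (hQ : 0 < Q) :
    (F p A Q).card ≤ 2 * Q.divisors.card := by
  rcases (F p A Q).eq_empty_or_nonempty with h | ⟨P0, hP0⟩
  · simp [h]
  have h0 : (Q : ℤ) ∣ p - P0 ^ 2 := (Finset.mem_filter.1 hP0).2
  have hQ' : (0 : ℤ) < Q := by exact_mod_cast hQ
  refine Finset.card_le_mul_card_image_of_maps_to
    (f := fun P => Int.gcd (P - P0) Q) ?_ 2 ?_
  · intro P _
    rw [Nat.mem_divisors]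
    refine ⟨?_, hQ.ne'⟩
    have : ((Int.gcd (P - P0) Q : ℕ) : ℤ) ∣ (Q : ℤ) := Int.gcd_dvd_right _ _
    exact_mod_cast this
  · intro d _
    by_contra hlt
    push Not at hlt
    obtain ⟨a, ha, b, hb, c, hc, hab, hac, hbc⟩ := Finset.two_lt_card.1 hlt
    simp only [F, Finset.mem_filter, Finset.mem_Ioc] at ha hb hc
    obtain ⟨x, hx⟩ := key hp h2 hQ' h0 ha.1.2 hb.1.2 (ha.2.trans hb.2.symm)
    obtain ⟨y, hy⟩ := key hp h2 hQ' h0 ha.1.2 hc.1.2 (ha.2.trans hc.2.symm)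
    obtain ⟨z, hz⟩ := key hp h2 hQ' h0 hb.1.2 hc.1.2 (hb.2.trans hc.2.symm)
    have bd : ∀ u v w : ℤ, A - Q < u → u ≤ A → A - Q < v → v ≤ A → u ≠ v →
        2 * (u - v) = Q * w → w = 1 ∨ w = -1 := by
      intro u v w h1 h2 h3 h4 h5 h6
      have l1 : w < 2 := by nlinarith
      have l2 : -2 < w := by nlinarith
      have l3 : w ≠ 0 := by
        rintro rfl
        apply h5
        linarith
      omega
    have bx := bd a b x ha.1.1.1 ha.1.1.2 hb.1.1.1 hb.1.1.2 hab hx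
    have bdy := bd a c y ha.1.1.1 ha.1.1.2 hc.1.1.1 hc.1.1.2 hac hy
    have bz := bd b c z hb.1.1.1 hb.1.1.2 hc.1.1.1 hc.1.1.2 hbc hz
    rcases bx with rfl | rfl <;> rcases bdy with rfl | rfl <;> rcases bz with rfl | rfl <;>
      omega

lemma sum_divisors_le (M : ℕ) :
    ((∑ Q ∈ Finset.Ioc 0 M, Q.divisors.card : ℕ) : ℝ) ≤ M * (1 + Real.log M) := by
  have h1 : ∑ Q ∈ Finset.Ioc 0 M, Q.divisors.card = ∑ d ∈ Finset.Ioc 0 M, M / d := by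
    have : ∀ Q ∈ Finset.Ioc 0 M, Q.divisors.card
        = ∑ d ∈ Finset.Ioc 0 M, if d ∣ Q then 1 else 0 := by
      intro Q hQ
      rw [Finset.mem_Ioc] at hQ
      rw [← Finset.card_filter]
      congr 1
      ext d
      simp only [Nat.mem_divisors, Finset.mem_filter, Finset.mem_Ioc]
      constructor
      · rintro ⟨h, h'⟩
        exact ⟨⟨Nat.pos_of_dvd_of_pos h hQ.1, (Nat.le_of_dvd hQ.1 h).trans hQ.2⟩, h⟩
      · rintro ⟨h, h'⟩
        exact ⟨h', by omega⟩
    rw [Finset.sum_congr rfl this, Finset.sum_comm]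
    refine Finset.sum_congr rfl fun d _ => ?_
    rw [← Finset.card_filter, Nat.Ioc_filter_dvd_card_eq_div]
  rw [h1]
  have h2 : (harmonic M : ℝ) = ∑ d ∈ Finset.Ioc 0 M, ((d : ℝ))⁻¹ := by
    rw [harmonic_eq_sum_Icc]
    push_cast
    rfl
  have h3 := harmonic_le_one_add_log M
  calc ((∑ d ∈ Finset.Ioc 0 M, M / d : ℕ) : ℝ)
      ≤ ∑ d ∈ Finset.Ioc 0 M, (M : ℝ) * (d : ℝ)⁻¹ := by
        push_cast
        refine Finset.sum_le_sum fun d _ => ?_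
        rw [← div_eq_mul_inv]
        exact Nat.cast_div_le
    _ = M * (harmonic M : ℝ) := by rw [h2, Finset.mul_sum]
    _ ≤ _ := by gcongr

/-- Invariant for the complete quotients. -/
lemma invariant {p : ℕ} (hp : p.Prime) (k : ℕ) :
    ∃ P Q : ℤ, 0 < Q ∧ Q ∣ p - P ^ 2 ∧ (P : ℝ) < √p ∧ √p < P + Q ∧ (Q : ℝ) < P + √p ∧
      cfAlpha √p (k + 1) = (P + √p) / Q := by
  have hirr : Irrational √(p : ℝ) := hp.irrational_sqrt
  set s : ℝ := √p with hs
  have hss : s * s = p := Real.mul_self_sqrt (by positivity)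
  have hs1 : 1 < s := by
    rw [hs, Real.lt_sqrt (by norm_num)]
    have := hp.one_lt
    norm_num
    exact this
  induction k with
  | zero =>
    have e1 : cfAlpha s 1 = 1 / (s - (⌊s⌋ : ℝ)) := rfl
    have l1 : (⌊s⌋ : ℝ) < s := lt_of_le_of_ne (Int.floor_le s) (fun h => hirr ⟨⌊s⌋, by simpa using h⟩)
    have l2 := Int.lt_floor_add_one s
    have l0 : (1 : ℤ) ≤ ⌊s⌋ := Int.le_floor.2 (by simpa using hs1.le)
    have l0' : (1 : ℝ) ≤ ⌊s⌋ := by exact_mod_cast l0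
    have hQ : (((p : ℤ) - ⌊s⌋ ^ 2 : ℤ) : ℝ) = (s - ⌊s⌋) * (s + ⌊s⌋) := by
      push_cast
      rw [← hss]
      ring
    refine ⟨⌊s⌋, p - ⌊s⌋ ^ 2, ?_, dvd_rfl, l1, ?_, ?_, ?_⟩
    · have : (0 : ℝ) < (((p : ℤ) - ⌊s⌋ ^ 2 : ℤ) : ℝ) := by
        rw [hQ]
        apply mul_pos <;> linarith
      exact_mod_cast this
    · rw [hQ]
      nlinarith
    · rw [hQ]
      nlinarith
    · rw [hQ, zero_add, e1]
      have : s - ⌊s⌋ ≠ 0 := by linarith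
      have : s + ⌊s⌋ ≠ 0 := by linarith
      field_simp
      ring
  | succ k ih =>
    obtain ⟨P, Q, hQ, hd, hP1, hP2, hP3, hα⟩ := ih
    have hQr : (0 : ℝ) < Q := by exact_mod_cast hQ
    have e1 : cfAlpha s (k + 1 + 1) =
      1 / (cfAlpha s (k + 1) - (⌊cfAlpha s (k + 1)⌋ : ℝ)) := rfl
    set α := cfAlpha s (k + 1) with hαdef
    set a := ⌊α⌋ with ha
    have m1 : α * Q = P + s := by rw [hα]; field_simp
    have m2 : (a : ℝ) ≤ α := Int.floor_le α
    have m3 : α < a + 1 := Int.lt_floor_add_one α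
    have m4 : (1 : ℤ) ≤ a := by
      apply Int.le_floor.2
      rw [hα, le_div_iff₀ hQr]
      push_cast
      linarith
    have m4' : (1 : ℝ) ≤ a := by exact_mod_cast m4
    have n1 : ((a * Q - P : ℤ) : ℝ) < s := by
      refine lt_of_le_of_ne ?_ (fun h => hirr ⟨(a * Q - P : ℤ), by simpa using h⟩)
      push_cast
      nlinarith
    have n2 : s < ((a * Q - P : ℤ) : ℝ) + Q := by
      push_cast
      nlinarith
    obtain ⟨c, hc⟩ := hd
    set P' : ℤ := a * Q - P with hP'
    have hdiv : (p : ℤ) - P' ^ 2 = Q * (c - a ^ 2 * Q + 2 * a * P) := by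
      have : (p : ℤ) = Q * c + P ^ 2 := by linarith
      rw [this, hP']
      ring
    set Q' : ℤ := c - a ^ 2 * Q + 2 * a * P with hQ'
    have hP'r : (P' : ℝ) = a * Q - P := by rw [hP']; push_cast; ring
    have hQQ : (Q : ℝ) * Q' = (s - P') * (s + P') := by
      have : ((p : ℝ) - (P' : ℝ) ^ 2) = Q * Q' := by exact_mod_cast hdiv
      rw [← this, ← hss]
      ring
    have hsum : (Q : ℝ) < s + P' := by
      rw [hP'r]
      nlinarith
    have hpos : 0 < (Q' : ℝ) := by
      have : 0 < (Q : ℝ) * Q' := by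
        rw [hQQ]
        apply mul_pos <;> linarith
      exact pos_of_mul_pos_right this hQr.le
    refine ⟨P', Q', by exact_mod_cast hpos, ⟨Q, by rw [hdiv]; ring⟩, n1, ?_, ?_, ?_⟩
    · nlinarith
    · nlinarith
    · have r1 : α - a = (s - P') / Q := by
        rw [eq_div_iff hQr.ne', hP'r]
        linarith
      have : s - P' ≠ 0 := by linarith
      rw [e1, r1, one_div_div, div_eq_div_iff this hpos.ne', hQQ]
      ring

lemma cfAlpha_shift {x : ℝ} {i j : ℕ} (h : cfAlpha x i = cfAlpha x j) (n : ℕ) :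
    cfAlpha x (i + n) = cfAlpha x (j + n) := by
  induction n with
  | zero => exact h
  | succ n ih =>
    change 1 / (cfAlpha x (i + n) - (⌊cfAlpha x (i + n)⌋ : ℝ)) =
      1 / (cfAlpha x (j + n) - (⌊cfAlpha x (j + n)⌋ : ℝ))
    rw [ih]

lemma period_le {x : ℝ} {i l : ℕ} (hl : 0 < l)
    (h : cfAlpha x i = cfAlpha x (i + l)) : cfPeriod x ≤ l := by
  unfold cfPeriod
  rcases Set.eq_empty_or_nonempty
    {l : ℕ | 0 < l ∧ ∀ k : ℕ, 1 ≤ k → cfA x (k + l) = cfA x k} with he | ⟨T, hT, hper⟩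
  · rw [he]
    simp
  · apply Nat.sInf_le
    refine ⟨hl, fun k hk => ?_⟩
    have hmul : ∀ n k : ℕ, 1 ≤ k → cfA x (k + n * T) = cfA x k := by
      intro n
      induction n with
      | zero => simp
      | succ n ih =>
        intro k hk
        rw [show k + (n + 1) * T = (k + n * T) + T by ring, hper _ (by omega), ih k hk]
    rw [← hmul i (k + l) (by omega), ← hmul i k hk]
    have hiT : i ≤ i * T := Nat.le_mul_of_pos_right i hT
    have := cfAlpha_shift h (k + (i * T - i))
    unfold cfA
    rw [show k + l + i * T = i + l + (k + (i * T - i)) by omega,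
      show k + i * T = i + (k + (i * T - i)) by omega, this]

lemma period_bound {p : ℕ} (hp : p.Prime) (h2 : p ≠ 2) :
    cfPeriod √(p : ℝ) ≤ ∑ Q ∈ Finset.Ioc 0 ⌊2 * √(p : ℝ)⌋₊, 2 * Q.divisors.card := by
  choose P Q hQ hd h1 h3 h4 hα using invariant hp
  set s : ℝ := √p with hs
  set M := ⌊2 * s⌋₊ with hM
  set S : Finset (Σ _ : ℕ, ℤ) := (Finset.Ioc 0 M).sigma (fun Q => F p ⌊s⌋ Q) with hS
  have hcard : S.card ≤ ∑ Q ∈ Finset.Ioc 0 M, 2 * Q.divisors.card := by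
    rw [hS, Finset.card_sigma]
    exact Finset.sum_le_sum fun Q hQ => card_F hp h2 _ (Finset.mem_Ioc.1 hQ).1
  refine le_trans ?_ hcard
  have hmaps : ∀ k, (⟨(Q k).toNat, P k⟩ : Σ _ : ℕ, ℤ) ∈ S := by
    intro k
    have hc : (((Q k).toNat : ℕ) : ℤ) = Q k := Int.toNat_of_nonneg (hQ k).le
    have hcr : (((Q k).toNat : ℕ) : ℝ) = Q k := by exact_mod_cast hc
    simp only [hS, Finset.mem_sigma, F, Finset.mem_filter, Finset.mem_Ioc, hc]
    refine ⟨⟨by have := hQ k; omega, ?_⟩, ⟨?_, ?_⟩, hd k⟩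
    · apply Nat.le_floor
      rw [hcr]
      linarith [h1 k, h4 k]
    · have : ⌊s⌋ < P k + Q k := Int.floor_lt.2 (by push_cast; exact h3 k)
      linarith
    · exact Int.le_floor.2 (h1 k).le
  obtain ⟨i, hi, j, hj, hij, he⟩ := Finset.exists_ne_map_eq_of_card_lt_of_maps_to
    (s := Finset.range (S.card + 1)) (t := S)
    (f := fun k => (⟨(Q k).toNat, P k⟩ : Σ _ : ℕ, ℤ)) (by simp) (fun k _ => hmaps k)
  have hαe : cfAlpha s (i + 1) = cfAlpha s (j + 1) := by
    simp only [Sigma.mk.injEq, heq_eq_eq] at he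
    have hQe : Q i = Q j := by
      have := hQ i
      have := hQ j
      omega
    rw [hα, hα, hQe, he.2]
  simp only [Finset.mem_range] at hi hj
  rcases lt_or_gt_of_ne hij with h | h
  · refine (period_le (i := i + 1) (l := j - i) (by omega) ?_).trans (by omega)
    rw [hαe]
    congr 1
    omega
  · refine (period_le (i := j + 1) (l := i - j) (by omega) ?_).trans (by omega)
    rw [← hαe]
    congr 1
    omega

lemma nth_prime_le {m : ℕ} (hm : 2 ≤ m) :
    Real.log (Nat.nth Nat.Prime (m - 1)) ≤ 8 * Real.log m ∧
    (Nat.nth Nat.Prime (m - 1) : ℝ) ≤ 32 * m * Real.log m := by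
  set p := Nat.nth Nat.Prime (m - 1) with hpdef
  have hp : p.Prime := Nat.prime_nth_prime _
  have hpi : Nat.primeCounting p = m := by
    rw [Nat.primeCounting_eq_primeCounting'_succ]
    have h1 : Nat.primeCounting' p = m - 1 := Nat.primeCounting'_nth_eq _
    unfold Nat.primeCounting' at h1 ⊢
    rw [Nat.count_succ, h1, if_pos hp]
    omega
  have hp2 : (2 : ℝ) ≤ p := by exact_mod_cast hp.two_le
  have hm2 : (2 : ℝ) ≤ m := by exact_mod_cast hm
  have hlogp : 0 < Real.log p := Real.log_pos (by linarith)
  have hA := Chebyshev.psi_ge p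
  have hB := Chebyshev.psi_le_primeCounting_mul_log p
  rw [hpi] at hB
  have hC : Real.log (p + 1) ≤ 2 * Real.log p := by
    rw [show 2 * Real.log p = Real.log ((p : ℝ) ^ 2) by rw [Real.log_pow]; norm_num]
    apply Real.log_le_log (by linarith)
    nlinarith
  have hD : (p : ℝ) ≤ 4 * m * Real.log p := by
    have := Real.log_two_gt_d9
    nlinarith
  have hE : Real.log p ≤ 2 * √p := by
    have h1 := Real.log_le_sub_one_of_pos (x := √(p : ℝ)) (by positivity)
    rw [Real.log_sqrt (by positivity)] at h1
    linarith
  have hsq : √(p : ℝ) * √p = p := Real.mul_self_sqrt (by positivity)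
  have hspos : 0 < √(p : ℝ) := by positivity
  have hF : √(p : ℝ) ≤ 8 * m := by
    have : √(p : ℝ) * √p ≤ 8 * m * √p := by
      rw [hsq]
      nlinarith
    exact le_of_mul_le_mul_right this hspos
  have hG : (p : ℝ) ≤ (m : ℝ) ^ 8 := by
    have h1 : (p : ℝ) ≤ 64 * m ^ 2 := by nlinarith
    have h2 : (2 : ℝ) ^ 6 ≤ (m : ℝ) ^ 6 := by gcongr
    have h3 : (0 : ℝ) < (m : ℝ) ^ 2 := by positivity
    nlinarith
  have hH : Real.log p ≤ 8 * Real.log m := by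
    have := Real.log_le_log (by linarith) hG
    rw [Real.log_pow] at this
    exact_mod_cast this
  refine ⟨hH, hD.trans ?_⟩
  nlinarith

end CFAux

theorem stmt_18 :
    ∃ C : ℝ, 0 < C ∧ ∀ m : ℕ, 2 ≤ m →
      (cfPeriod (Real.sqrt (Nat.nth Nat.Prime (m - 1))) : ℝ) ≤
        C * Real.sqrt m * (Real.log m) ^ ((3 : ℝ) / 2) := by
  refine ⟨480, by norm_num, fun m hm => ?_⟩
  obtain ⟨hL, hU⟩ := CFAux.nth_prime_le hm
  have hp3 : 3 ≤ Nat.nth Nat.Prime (m - 1) := by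
    have := Nat.add_two_le_nth_prime (m - 1)
    omega
  have hp : (Nat.nth Nat.Prime (m - 1)).Prime := Nat.prime_nth_prime _
  set p := Nat.nth Nat.Prime (m - 1) with hpdef
  have hT := CFAux.period_bound hp (by omega)
  rw [← Finset.mul_sum] at hT
  have hT' : (cfPeriod √(p : ℝ) : ℝ) ≤
      2 * ((∑ Q ∈ Finset.Ioc 0 ⌊2 * √(p : ℝ)⌋₊, Q.divisors.card : ℕ) : ℝ) := by
    exact_mod_cast hT
  have hS := CFAux.sum_divisors_le ⌊2 * √(p : ℝ)⌋₊
  have hp3r : (3 : ℝ) ≤ p := by exact_mod_cast hp3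
  have hs1 : 1 ≤ √(p : ℝ) := by
    rw [Real.le_sqrt (by norm_num) (by linarith)]
    linarith
  set M := ⌊2 * √(p : ℝ)⌋₊ with hM
  have hM1 : (M : ℝ) ≤ 2 * √p := Nat.floor_le (by positivity)
  have hM0 : 1 ≤ M := Nat.le_floor (by push_cast; linarith)
  have hM0r : (1 : ℝ) ≤ M := by exact_mod_cast hM0
  have hlog1 : 1 ≤ Real.log p := by
    rw [Real.le_log_iff_exp_le (by linarith)]
    linarith [Real.exp_one_lt_d9]
  have hlogM : Real.log M ≤ 3 / 2 * Real.log p := by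
    have h1 := Real.log_le_log (by linarith) hM1
    rw [Real.log_mul (by norm_num) (by positivity), Real.log_sqrt (by positivity)] at h1
    linarith [Real.log_two_lt_d9]
  have hlm : 0 < Real.log m := Real.log_pos (by exact_mod_cast hm)
  have hb : (cfPeriod √(p : ℝ) : ℝ) ≤ 10 * √p * Real.log p := by
    have h1 : (M : ℝ) * (1 + Real.log M) ≤ (2 * √p) * (5 / 2 * Real.log p) := by
      apply mul_le_mul hM1 (by linarith) _ (by positivity)
      have := Real.log_nonneg hM0r
      linarith
    linarith
  have hsq : √(p : ℝ) ≤ 6 * (√m * √(Real.log m)) := by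
    rw [← Real.sqrt_mul (by positivity)]
    apply Real.sqrt_le_iff.2
    refine ⟨by positivity, ?_⟩
    rw [mul_pow, Real.sq_sqrt (by positivity)]
    have : 0 ≤ (m : ℝ) * Real.log m := by positivity
    linarith
  have hpow : (Real.log m) ^ ((3 : ℝ) / 2) = √(Real.log m) * Real.log m := by
    rw [show (3 : ℝ) / 2 = 1 / 2 + 1 by norm_num, Real.rpow_add hlm, Real.rpow_one,
      Real.sqrt_eq_rpow]
  rw [hpow]
  calc (cfPeriod √(p : ℝ) : ℝ) ≤ 10 * √p * Real.log p := hb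
    _ ≤ 10 * (6 * (√m * √(Real.log m))) * (8 * Real.log m) := by gcongr
    _ = _ := by ring
end

section
/- Let l ≥ 2 be an even integer and let a₁, …, a_{l−1} be positive integers with a_{l−i} = a_i for 1 ≤ i ≤ l−1. Set E = q_{l−1}(a₁, …, a_{l−1}), F = q_{l−2}(a₁, …, a_{l−2}), G = q_{l−3}(a₂, …, a_{l−2}), so that F² − EG = 1. (1) If F is even (so E, G are odd), set E_± = gcd(F±1, E) and G_± = gcd(F±1, G); then for every integer t, E²·t² + (2F − EFG)·t + (F²/4 − 1)·G² = (E_+²·t − G_−²·(F+2)/2)·(E_−²·t − G_+²·(F−2)/2). (2) If F is odd and E, G are even, set E_± = gcd(F±1, E)/2 and G_± = gcd(F±1, G)/2; then for every integer t, (E²/4)·t² + (F − EFG/2)·t + ((F²−4)/4)·G² = (E_+²·t − G_−²·(F+2))·(E_−²·t − G_+²·(F−2)). Moreover, in both cases, for every integer t ≥ t₀ := ⌊FG/E⌋ + 1 both factors are positive integers, and if the value D(t) of the quadratic polynomial is a prime number for some t ≥ t₀, then t = t₀. -/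
theorem cq_front (n : ℕ) : ∀ x : ℕ → ℤ, contq x (n + 2) =
    x 1 * contq (fun i => x (i + 1)) (n + 1) + contq (fun i => x (i + 2)) n := by
  induction n using Nat.strong_induction_on with
  | _ n ih =>
    intro x
    match n, ih with
    | 0, _ => simp [contq]
    | 1, _ => simp [contq]; ring
    | n + 2, ih =>
      have h1 := ih n (by omega) x
      have h2 := ih (n + 1) (by omega) x
      rw [show contq x (n + 2 + 2) = x (n + 3) * contq x (n + 1 + 2) + contq x (n + 2) from rfl, h1, h2]
      rw [show contq (fun i => x (i + 1)) (n + 2 + 1) = x (n + 3) * contq (fun i => x (i + 1)) (n + 1 + 1)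
        + contq (fun i => x (i + 1)) (n + 1) from rfl]
      rw [show contq (fun i => x (i + 2)) (n + 2) = x (n + 3) * contq (fun i => x (i + 2)) (n + 1)
        + contq (fun i => x (i + 2)) n from rfl]
      ring

theorem cq_rev (n : ℕ) : ∀ x y : ℕ → ℤ, (∀ i, 1 ≤ i → i ≤ n → y i = x (n + 1 - i)) →
    contq x (n + 1) = contq y (n + 1) := by
  induction n using Nat.strong_induction_on with
  | _ n ih =>
    intro x y h
    match n, ih with
    | 0, _ => simp [contq]
    | 1, _ => simp [contq, h 1 le_rfl le_rfl]
    | n + 2, ih =>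
      have h1 := ih n (by omega) (fun i => x (i + 2)) y (by
        intro i hi hi'
        rw [h i hi (by omega)]
        show _ = x _
        congr 1
        omega)
      have h2 := ih (n + 1) (by omega) (fun i => x (i + 1)) y (by
        intro i hi hi'
        rw [h i hi (by omega)]
        show _ = x _
        congr 1
        omega)
      rw [cq_front (n + 1) x, h1, h2]
      have h3 := h (n + 2) (by omega) le_rfl
      rw [show n + 2 + 1 - (n + 2) = 1 by omega] at h3
      rw [← h3]
      rfl

theorem cq_det (n : ℕ) (x : ℕ → ℤ) :
    contq x (n + 2) * contq (fun i => x (i + 1)) n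
      - contq x (n + 1) * contq (fun i => x (i + 1)) (n + 1) = - (-1) ^ n := by
  induction n with
  | zero => simp [contq]
  | succ n ih =>
    rw [show contq x (n + 1 + 2) = x (n + 2) * contq x (n + 2) + contq x (n + 1) from rfl]
    rw [show contq (fun i => x (i + 1)) (n + 1 + 1) = x (n + 2) * contq (fun i => x (i + 1)) (n + 1)
        + contq (fun i => x (i + 1)) n from rfl]
    rw [pow_succ]
    linear_combination -ih

theorem cq_pos (n : ℕ) (x : ℕ → ℤ) (h : ∀ i, 1 ≤ i → i ≤ n → 0 < x i) :
    0 < contq x (n + 1) ∧ 0 ≤ contq x n := by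
  induction n with
  | zero => simp [contq]
  | succ n ih =>
    obtain ⟨h1, h2⟩ := ih (fun i hi hi' => h i hi (by omega))
    refine ⟨?_, h1.le⟩
    rw [show contq x (n + 1 + 1) = x (n + 1) * contq x (n + 1) + contq x n from rfl]
    have := mul_pos (h (n + 1) (by omega) le_rfl) h1
    linarith

theorem gcd_nat (u v e g : ℕ) (hc : Nat.Coprime u v) (h : u * v = e * g) :
    Nat.gcd u e * Nat.gcd v e = e ∧ Nat.gcd u g * Nat.gcd v g = g ∧
    Nat.gcd u e * Nat.gcd u g = u ∧ Nat.gcd v e * Nat.gcd v g = v := by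
  have h1 : Nat.gcd u e * Nat.gcd v e = e := by
    rw [Nat.gcd_comm u, Nat.gcd_comm v, ← Nat.Coprime.gcd_mul e hc, h]
    exact Nat.gcd_eq_left (Dvd.intro _ rfl)
  have h2 : Nat.gcd u g * Nat.gcd v g = g := by
    rw [Nat.gcd_comm u, Nat.gcd_comm v, ← Nat.Coprime.gcd_mul g hc, h]
    exact Nat.gcd_eq_left (Dvd.intro_left _ rfl)
  have key : (Nat.gcd u e * Nat.gcd u g) * (Nat.gcd v e * Nat.gcd v g) = u * v := by
    calc _ = (Nat.gcd u e * Nat.gcd v e) * (Nat.gcd u g * Nat.gcd v g) := by ring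
      _ = _ := by rw [h1, h2, h]
  refine ⟨h1, h2, ?_, ?_⟩
  · apply Nat.dvd_antisymm
    · refine Nat.Coprime.dvd_of_dvd_mul_right (n := v) ?_ (Dvd.intro _ key)
      exact Nat.Coprime.mul_left (hc.coprime_dvd_left (Nat.gcd_dvd_left _ _))
        (hc.coprime_dvd_left (Nat.gcd_dvd_left _ _))
    · refine Nat.Coprime.dvd_of_dvd_mul_right (n := Nat.gcd v e * Nat.gcd v g) ?_
        (key ▸ Dvd.intro _ rfl)
      exact Nat.Coprime.mul_right (hc.coprime_dvd_right (Nat.gcd_dvd_left _ _))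
        (hc.coprime_dvd_right (Nat.gcd_dvd_left _ _))
  · apply Nat.dvd_antisymm
    · refine Nat.Coprime.dvd_of_dvd_mul_left (m := u) ?_ (Dvd.intro_left _ key)
      exact Nat.Coprime.mul_left (hc.symm.coprime_dvd_left (Nat.gcd_dvd_left _ _))
        (hc.symm.coprime_dvd_left (Nat.gcd_dvd_left _ _))
    · refine Nat.Coprime.dvd_of_dvd_mul_left (m := Nat.gcd u e * Nat.gcd u g) ?_
        (key ▸ Dvd.intro_left _ rfl)
      exact Nat.Coprime.mul_right (hc.symm.coprime_dvd_right (Nat.gcd_dvd_left _ _))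
        (hc.symm.coprime_dvd_right (Nat.gcd_dvd_left _ _))

theorem gcd_int (u v e g : ℤ) (hu : 0 ≤ u) (hv : 0 ≤ v) (he : 0 ≤ e) (hg : 0 ≤ g)
    (hc : IsCoprime u v) (h : u * v = e * g) :
    (Int.gcd u e : ℤ) * Int.gcd v e = e ∧ (Int.gcd u g : ℤ) * Int.gcd v g = g ∧
    (Int.gcd u e : ℤ) * Int.gcd u g = u ∧ (Int.gcd v e : ℤ) * Int.gcd v g = v := by
  lift u to ℕ using hu
  lift v to ℕ using hv
  lift e to ℕ using he
  lift g to ℕ using hg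
  have := gcd_nat u v e g (Nat.isCoprime_iff_coprime.mp hc) (by exact_mod_cast h)
  simp only [Int.gcd_natCast_natCast]
  exact_mod_cast this

theorem not_prime_step (P Q A B t t₀ : ℤ) (hP : 0 < P) (hQ : 0 < Q)
    (h0 : 0 < P ^ 2 * t₀ - A) (h1 : 0 < Q ^ 2 * t₀ - B) (ht : t₀ ≤ t)
    (hp : Prime ((P ^ 2 * t - A) * (Q ^ 2 * t - B))) : t = t₀ := by
  by_contra hne
  have hlt : t₀ + 1 ≤ t := by omega
  have hP2 : 1 ≤ P ^ 2 := by nlinarith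
  have hQ2 : 1 ≤ Q ^ 2 := by nlinarith
  have e1 : 2 ≤ P ^ 2 * t - A := by nlinarith
  have e2 : 2 ≤ Q ^ 2 * t - B := by nlinarith
  rcases hp.irreducible.isUnit_or_isUnit rfl with h | h
  · rcases Int.isUnit_iff.mp h with h | h <;> omega
  · rcases Int.isUnit_iff.mp h with h | h <;> omega

set_option maxHeartbeats 1600000 in
theorem stmt_19 (l : ℕ) (hl : 2 ≤ l) (hleven : Even l) (a : ℕ → ℤ)
    (hpos : ∀ i : ℕ, 1 ≤ i → i ≤ l - 1 → 0 < a i)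
    (hpal : ∀ i : ℕ, 1 ≤ i → i ≤ l - 1 → a (l - i) = a i)
    (E F G : ℤ)
    (hE : E = contq a l)                       -- E = q_{l−1}(a₁, …, a_{l−1})
    (hF : F = contq a (l - 1))                 -- F = q_{l−2}(a₁, …, a_{l−2})
    (hG : G = contq (fun i => a (i + 1)) (l - 2)) :  -- G = q_{l−3}(a₂, …, a_{l−2})
    F ^ 2 - E * G = 1 ∧
    -- Case (1): F even (so E and G odd), with E_± = gcd(F±1, E), G_± = gcd(F±1, G)
    (Even F →
      ∀ Ep Em Gp Gm : ℤ,
        Ep = Int.gcd (F + 1) E → Em = Int.gcd (F - 1) E →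
        Gp = Int.gcd (F + 1) G → Gm = Int.gcd (F - 1) G →
        (∀ t : ℤ,
          E ^ 2 * t ^ 2 + (2 * F - E * F * G) * t + (F ^ 2 / 4 - 1) * G ^ 2 =
            (Ep ^ 2 * t - Gm ^ 2 * ((F + 2) / 2)) *
              (Em ^ 2 * t - Gp ^ 2 * ((F - 2) / 2))) ∧
        (∀ t : ℤ, F * G / E + 1 ≤ t →
          0 < Ep ^ 2 * t - Gm ^ 2 * ((F + 2) / 2) ∧
            0 < Em ^ 2 * t - Gp ^ 2 * ((F - 2) / 2)) ∧
        (∀ t : ℤ, F * G / E + 1 ≤ t →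
          Prime (E ^ 2 * t ^ 2 + (2 * F - E * F * G) * t + (F ^ 2 / 4 - 1) * G ^ 2) →
          t = F * G / E + 1)) ∧
    -- Case (2): F odd and E, G even, with 2·E_± = gcd(F±1, E), 2·G_± = gcd(F±1, G)
    (Odd F → Even E → Even G →
      ∀ Ep Em Gp Gm : ℤ,
        2 * Ep = Int.gcd (F + 1) E → 2 * Em = Int.gcd (F - 1) E →
        2 * Gp = Int.gcd (F + 1) G → 2 * Gm = Int.gcd (F - 1) G →
        (∀ t : ℤ,
          E ^ 2 / 4 * t ^ 2 + (F - E * F * G / 2) * t + (F ^ 2 - 4) * G ^ 2 / 4 =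
            (Ep ^ 2 * t - Gm ^ 2 * (F + 2)) * (Em ^ 2 * t - Gp ^ 2 * (F - 2))) ∧
        (∀ t : ℤ, F * G / E + 1 ≤ t →
          0 < Ep ^ 2 * t - Gm ^ 2 * (F + 2) ∧ 0 < Em ^ 2 * t - Gp ^ 2 * (F - 2)) ∧
        (∀ t : ℤ, F * G / E + 1 ≤ t →
          Prime (E ^ 2 / 4 * t ^ 2 + (F - E * F * G / 2) * t + (F ^ 2 - 4) * G ^ 2 / 4) →
          t = F * G / E + 1)) := by
  obtain ⟨n, rfl⟩ : ∃ n, l = n + 2 := ⟨l - 2, by omega⟩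
  have hn : Even n := by
    rw [Nat.even_add] at hleven
    exact hleven.mpr even_two
  rw [show n + 2 - 1 = n + 1 by omega] at hF hpos hpal
  rw [show n + 2 - 2 = n by omega] at hG
  have hdet := cq_det n a
  rw [hn.neg_one_pow, ← cq_rev n a (fun i => a (i + 1)) (by
    intro i hi hi'
    show a (i + 1) = _
    rw [← hpal (i + 1) (by omega) (by omega)]
    congr 1
    omega), ← hE, ← hF, ← hG] at hdet
  have hEpos : 0 < E := hE ▸ (cq_pos (n + 1) a hpos).1
  have hFpos : 0 < F := hF ▸ (cq_pos n a (fun i hi hi' => hpos i hi (by omega))).1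
  clear hE hF hG hpos hpal
  have hFE : F ^ 2 - E * G = 1 := by linarith
  have hGnn : 0 ≤ G := by
    by_contra hneg
    push Not at hneg
    nlinarith
  have ht0 : ∀ t : ℤ, F * G / E + 1 ≤ t → F * G < E * t := by
    intro t ht
    have := Int.lt_mul_ediv_self_add (x := F * G) hEpos
    nlinarith
  refine ⟨hFE, ?_, ?_⟩
  · intro hev Ep Em Gp Gm hEp hEm hGp hGm
    obtain ⟨k, hk⟩ := hev
    have hk1 : 1 ≤ k := by omega
    obtain ⟨q1, q2, q3, q4⟩ := gcd_int (F + 1) (F - 1) E G (by omega) (by omega) hEpos.le hGnn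
      ⟨1 - k, k, by rw [hk]; ring⟩ (by linarith)
    rw [← hEp, ← hEm] at q1
    rw [← hGp, ← hGm] at q2
    rw [← hEp, ← hGp] at q3
    rw [← hEm, ← hGm] at q4
    have nEp : 0 ≤ Ep := by omega
    have nEm : 0 ≤ Em := by omega
    have nGp : 0 ≤ Gp := by omega
    have nGm : 0 ≤ Gm := by omega
    clear hEp hEm hGp hGm
    have pEp : 0 < Ep := by
      rcases nEp.eq_or_lt with h | h
      · rw [← h] at q1; omega
      · exact h
    have pEm : 0 < Em := by
      rcases nEm.eq_or_lt with h | h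
      · rw [← h] at q1; omega
      · exact h
    have d1 : (F + 2) / 2 = k + 1 := by omega
    have d2 : (F - 2) / 2 = k - 1 := by omega
    have d3 : F ^ 2 / 4 = k ^ 2 := by
      rw [hk, show (k + k) ^ 2 = 4 * k ^ 2 by ring]
      exact Int.mul_ediv_cancel_left _ (by norm_num)
    have hid : ∀ t : ℤ,
          E ^ 2 * t ^ 2 + (2 * F - E * F * G) * t + (F ^ 2 / 4 - 1) * G ^ 2 =
            (Ep ^ 2 * t - Gm ^ 2 * ((F + 2) / 2)) *
              (Em ^ 2 * t - Gp ^ 2 * ((F - 2) / 2)) := by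
      intro t
      rw [d1, d2, d3]
      have hF2 : F = 2 * k := by omega
      have r1 : Ep ^ 2 * Em ^ 2 = E ^ 2 := by rw [← q1]; ring
      have r2 : Gp ^ 2 * Gm ^ 2 = G ^ 2 := by rw [← q2]; ring
      have r3 : Ep ^ 2 * Gp ^ 2 = (2 * k + 1) ^ 2 := by rw [← hF2, ← q3]; ring
      have r4 : Em ^ 2 * Gm ^ 2 = (2 * k - 1) ^ 2 := by rw [← hF2, ← q4]; ring
      have r5 : E * G = 4 * k ^ 2 - 1 := by rw [hF2] at hFE; linarith
      rw [show E * F * G = F * (E * G) by ring, r5, hF2]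
      linear_combination -t ^ 2 * r1 - (k ^ 2 - 1) * r2 + t * (k - 1) * r3 + t * (k + 1) * r4
    have hps : ∀ t : ℤ, F * G / E + 1 ≤ t →
          0 < Ep ^ 2 * t - Gm ^ 2 * ((F + 2) / 2) ∧
            0 < Em ^ 2 * t - Gp ^ 2 * ((F - 2) / 2) := by
      intro t ht
      have h := ht0 t ht
      rw [d1, d2]
      have hA := mul_lt_mul_of_pos_left h pEp
      have hB := mul_lt_mul_of_pos_left h pEm
      have hF2 : F = 2 * k := by omega
      constructor
      · refine pos_of_mul_pos_right (a := Em) ?_ nEm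
        have e1 : Em * (Ep ^ 2 * t - Gm ^ 2 * (k + 1)) = Ep * (E * t) - Gm * (k + 1) * (F - 1) := by
          rw [← q1, ← q4]; ring
        have e2 : Ep * (F * G) = F * Gm * (F + 1) := by rw [← q2, ← q3]; ring
        rw [e1]
        rw [e2] at hA
        have : 0 ≤ Gm * (F * (F + 1) - (k + 1) * (F - 1)) := mul_nonneg nGm (by rw [hF2]; nlinarith)
        nlinarith
      · refine pos_of_mul_pos_right (a := Ep) ?_ nEp
        have e1 : Ep * (Em ^ 2 * t - Gp ^ 2 * (k - 1)) = Em * (E * t) - Gp * (k - 1) * (F + 1) := by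
          rw [← q1, ← q3]; ring
        have e2 : Em * (F * G) = F * Gp * (F - 1) := by rw [← q2, ← q4]; ring
        rw [e1]
        rw [e2] at hB
        have : 0 ≤ Gp * (F * (F - 1) - (k - 1) * (F + 1)) := mul_nonneg nGp (by rw [hF2]; nlinarith)
        nlinarith
    refine ⟨hid, hps, ?_⟩
    intro t ht hp
    rw [hid] at hp
    obtain ⟨p1, p2⟩ := hps _ le_rfl
    exact not_prime_step Ep Em _ _ t _ pEp pEm p1 p2 ht hp
  · intro hodd hEe hGe Ep Em Gp Gm hEp hEm hGp hGm
    obtain ⟨k, hk⟩ := hodd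
    obtain ⟨e, he⟩ := hEe
    obtain ⟨g, hg⟩ := hGe
    have hk0 : 0 ≤ k := by omega
    have heg : (k + 1) * k = e * g := by
      rw [hk, he, hg] at hFE
      nlinarith
    obtain ⟨q1, q2, q3, q4⟩ := gcd_int (k + 1) k e g (by omega) (by omega) (by omega) (by omega)
      ⟨1, -1, by ring⟩ heg
    rw [show F + 1 = 2 * (k + 1) by omega, show E = 2 * e by omega, Int.gcd_mul_left] at hEp
    rw [show F + 1 = 2 * (k + 1) by omega, show G = 2 * g by omega, Int.gcd_mul_left] at hGp
    rw [show F - 1 = 2 * k by omega, show E = 2 * e by omega, Int.gcd_mul_left] at hEm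
    rw [show F - 1 = 2 * k by omega, show G = 2 * g by omega, Int.gcd_mul_left] at hGm
    have hEp' : Ep = Int.gcd (k + 1) e := by push_cast at hEp; simp at hEp; exact hEp
    have hEm' : Em = Int.gcd k e := by push_cast at hEm; simp at hEm; exact hEm
    have hGp' : Gp = Int.gcd (k + 1) g := by push_cast at hGp; simp at hGp; exact hGp
    have hGm' : Gm = Int.gcd k g := by push_cast at hGm; simp at hGm; exact hGm
    rw [← hEp', ← hEm'] at q1
    rw [← hGp', ← hGm'] at q2
    rw [← hEp', ← hGp'] at q3
    rw [← hEm', ← hGm'] at q4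
    have nEp : 0 ≤ Ep := by omega
    have nEm : 0 ≤ Em := by omega
    have nGp : 0 ≤ Gp := by omega
    have nGm : 0 ≤ Gm := by omega
    clear hEp hEm hGp hGm hEp' hEm' hGp' hGm'
    have pEp : 0 < Ep := by
      rcases nEp.eq_or_lt with h | h
      · rw [← h] at q1; omega
      · exact h
    have pEm : 0 < Em := by
      rcases nEm.eq_or_lt with h | h
      · rw [← h] at q1; omega
      · exact h
    have d1 : E ^ 2 / 4 = e ^ 2 := by
      rw [he, show (e + e) ^ 2 = 4 * e ^ 2 by ring]
      exact Int.mul_ediv_cancel_left _ (by norm_num)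
    have d2 : E * F * G / 2 = 2 * F * (e * g) := by
      rw [he, hg, show (e + e) * F * (g + g) = 2 * (2 * F * (e * g)) by ring]
      exact Int.mul_ediv_cancel_left _ (by norm_num)
    have d3 : (F ^ 2 - 4) * G ^ 2 / 4 = (F ^ 2 - 4) * g ^ 2 := by
      rw [hg, show (F ^ 2 - 4) * (g + g) ^ 2 = 4 * ((F ^ 2 - 4) * g ^ 2) by ring]
      exact Int.mul_ediv_cancel_left _ (by norm_num)
    have hid : ∀ t : ℤ,
          E ^ 2 / 4 * t ^ 2 + (F - E * F * G / 2) * t + (F ^ 2 - 4) * G ^ 2 / 4 =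
            (Ep ^ 2 * t - Gm ^ 2 * (F + 2)) * (Em ^ 2 * t - Gp ^ 2 * (F - 2)) := by
      intro t
      rw [d1, d2, d3, ← heg, hk]
      have r1 : Ep ^ 2 * Em ^ 2 = e ^ 2 := by rw [← q1]; ring
      have r2 : Gp ^ 2 * Gm ^ 2 = g ^ 2 := by rw [← q2]; ring
      have r3 : Ep ^ 2 * Gp ^ 2 = (k + 1) ^ 2 := by rw [← q3]; ring
      have r4 : Em ^ 2 * Gm ^ 2 = k ^ 2 := by rw [← mul_pow, q4]
      linear_combination -t ^ 2 * r1 - ((2 * k + 1) ^ 2 - 4) * r2 + t * (2 * k - 1) * r3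
        + t * (2 * k + 3) * r4
    have hps : ∀ t : ℤ, F * G / E + 1 ≤ t →
          0 < Ep ^ 2 * t - Gm ^ 2 * (F + 2) ∧ 0 < Em ^ 2 * t - Gp ^ 2 * (F - 2) := by
      intro t ht
      have h := ht0 t ht
      have h : F * g < e * t := by rw [he, hg] at h; nlinarith
      have hA := mul_lt_mul_of_pos_left h pEp
      have hB := mul_lt_mul_of_pos_left h pEm
      constructor
      · refine pos_of_mul_pos_right (a := Em) ?_ nEm
        have e1 : Em * (Ep ^ 2 * t - Gm ^ 2 * (F + 2)) = Ep * (e * t) - Gm * (F + 2) * k := by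
          rw [← q1]; linear_combination -Gm * (F + 2) * q4
        have e2 : Ep * (F * g) = F * Gm * (k + 1) := by rw [← q2, ← q3]; ring
        rw [e1]
        rw [e2] at hA
        have : Gm * (F * (k + 1) - (F + 2) * k) = Gm := by rw [hk]; ring
        nlinarith
      · refine pos_of_mul_pos_right (a := Ep) ?_ nEp
        have e1 : Ep * (Em ^ 2 * t - Gp ^ 2 * (F - 2)) = Em * (e * t) - Gp * (F - 2) * (k + 1) := by
          rw [← q1, ← q3]; ring
        have e2 : Em * (F * g) = F * Gp * k := by
          rw [← q2]; linear_combination F * Gp * q4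
        rw [e1]
        rw [e2] at hB
        have : Gp * (F * k - (F - 2) * (k + 1)) = Gp := by rw [hk]; ring
        nlinarith
    refine ⟨hid, hps, ?_⟩
    intro t ht hp
    rw [hid] at hp
    obtain ⟨p1, p2⟩ := hps _ le_rfl
    exact not_prime_step Ep Em _ _ t _ pEp pEm p1 p2 ht hp
end
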